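/- arXiv:math/0511628 — 4 statements merged into one kernel-verified Lean document; each statement's English description precedes it below -/
import Mathlib

section
/- Let K be an algebraically closed field and n ≥ 2. The coordinate ring K[SL_n] is a unique factorisation domain, and the restriction Δ'_{n-1} of the (n−1)-th principal minor to SL_n is an irreducible element of K[SL_n]. -/
open MvPolynomial

/-- The determinant of the generic `n × n` matrix in `K[Mat_n] = K[ξ_{ij}]`. -/
noncomputable def genDet (K : Type*) [CommRing K] (n : ℕ) :
    MvPolynomial (Fin n × Fin n) K :=
  Matrix.det (Matrix.of fun i j : Fin n => X (i, j))

/-- The `k`-th principal minor `Δ_k` of the generic `n × n` matrix. -/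
noncomputable def genDelta (K : Type*) [CommRing K] (n : ℕ) (k : ℕ) (hk : k ≤ n) :
    MvPolynomial (Fin n × Fin n) K :=
  Matrix.det (Matrix.of fun i j : Fin k => X (Fin.castLE hk i, Fin.castLE hk j))

universe u

theorem aux_det_mem {R S : Type*} [CommRing R] [CommRing S] [Algebra R S] (T : Subalgebra R S) {k : ℕ}
    (M : Matrix (Fin k) (Fin k) S) (h : ∀ i j, M i j ∈ T) : M.det ∈ T := by
  rw [Matrix.det_apply]
  refine sum_mem fun σ _ => ?_
  rw [Units.smul_def]
  exact zsmul_mem (prod_mem fun i _ => h _ _) _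

theorem aux_notin_vars {R σ : Type*} [CommRing R] {s : σ} {p : MvPolynomial σ R}
    (h : p ∈ supported R ({s}ᶜ : Set σ)) : s ∉ p.vars := by
  rw [mem_supported] at h
  intro hs
  exact h hs rfl

/-- A polynomial linear in one variable, with prime leading coefficient not dividing
the constant one, is prime. -/
theorem aux_prime_linear {R σ : Type*} [CommRing R] [IsDomain R] [UniqueFactorizationMonoid R]
    (s : σ) (m r : MvPolynomial σ R) (hm : m ∈ supported R ({s}ᶜ : Set σ))
    (hr : r ∈ supported R ({s}ᶜ : Set σ)) (hp : Prime m) (hd : ¬ m ∣ r) :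
    Prime (m * X s + r) := by
  rw [← irreducible_iff_prime]
  exact irreducible_mul_X_add m r s hp.ne_zero (aux_notin_vars hm) (aux_notin_vars hr)
    ((hp.irreducible.isRelPrime_iff_not_dvd).2 hd)

/-- the row expansion tail -/
noncomputable def auxTail {S : Type*} [CommRing S] {k : ℕ} (M : Matrix (Fin (k+1)) (Fin (k+1)) S) : S :=
  ∑ j : Fin k, (-1) ^ (j.succ : ℕ) * M 0 j.succ * (M.submatrix Fin.succ j.succ.succAbove).det

theorem aux_det_expand {S : Type*} [CommRing S] {k : ℕ} (M : Matrix (Fin (k+1)) (Fin (k+1)) S) :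
    M.det = (M.submatrix Fin.succ Fin.succ).det * M 0 0 + auxTail M := by
  rw [Matrix.det_succ_row_zero, Fin.sum_univ_succ, auxTail]
  simp [mul_comm]

theorem aux_tail_map {S T : Type*} [CommRing S] [CommRing T] (f : S →+* T) {k : ℕ}
    (M : Matrix (Fin (k+1)) (Fin (k+1)) S) : f (auxTail M) = auxTail (M.map f) := by
  simp [auxTail, RingHom.map_det]
  rfl

theorem aux_tail_mem {R S : Type*} [CommRing R] [CommRing S] [Algebra R S] (T : Subalgebra R S) {k : ℕ}
    (M : Matrix (Fin (k+1)) (Fin (k+1)) S) (h : ∀ i j, (i, j) ≠ (0, 0) → M i j ∈ T) :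
    auxTail M ∈ T := by
  refine sum_mem fun j _ => ?_
  refine mul_mem (mul_mem (pow_mem (neg_mem (one_mem _)) _) (h _ _ (by simp))) ?_
  exact aux_det_mem _ _ fun a b => h _ _ (by simp)

/-- generic determinant is prime -/
theorem aux_det_prime {R σ : Type*} [CommRing R] [IsDomain R] [UniqueFactorizationMonoid R]
    (k : ℕ) : ∀ (f : Fin (k+1) → Fin (k+1) → σ), Function.Injective (Function.uncurry f) →
    Prime (Matrix.det (Matrix.of fun i j => (X (f i j) : MvPolynomial σ R))) := by
  induction k with
  | zero =>
    intro f _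
    simpa using X_prime
  | succ k ih =>
    intro f hf
    have hinj : ∀ {a b c d}, f a b = f c d → (a, b) = (c, d) := fun {a b c d} h =>
      hf (a₁ := (a, b)) (a₂ := (c, d)) h
    set M : Matrix (Fin (k+2)) (Fin (k+2)) (MvPolynomial σ R) :=
      Matrix.of fun i j => X (f i j) with hM
    have hmp : Prime (M.submatrix Fin.succ Fin.succ).det := by
      refine ih (fun i j => f i.succ j.succ) ?_
      rintro ⟨a, b⟩ ⟨c, d⟩ h
      have := hinj h
      simpa using this
    have hmem : ∀ i j, (i, j) ≠ (0, 0) → M i j ∈ supported R ({f 0 0}ᶜ : Set σ) := by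
      intro i j hij
      refine X_mem_supported.2 fun h => hij (hinj h)
    rw [aux_det_expand]
    refine aux_prime_linear _ _ _ (aux_det_mem _ _ fun i j => hmem _ _ (by simp))
      (aux_tail_mem _ _ hmem) hmp ?_
    intro hd
    let W : Matrix (Fin (k+2)) (Fin (k+2)) R :=
      (1 : Matrix (Fin (k+2)) (Fin (k+2)) R).submatrix (Equiv.swap 0 1) id
    let e : MvPolynomial σ R →+* R := eval (Function.extend (Function.uncurry f) (Function.uncurry W) 0)
    have he : M.map e = W := by
      ext i j
      simp only [hM, e, Matrix.map_apply, Matrix.of_apply, eval_X]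
      exact hf.extend_apply (Function.uncurry W) 0 (i, j)
    have h0 : (W.submatrix Fin.succ Fin.succ).det = 0 := by
      apply Matrix.det_eq_zero_of_row_eq_zero 0
      intro j
      simp [W, (Fin.succ_ne_zero j).symm]
    have h1 : W.det = -1 := by
      simp [W, Matrix.det_permute]
    rw [aux_det_expand, h0] at h1
    have h2 := map_dvd e hd
    rw [aux_tail_map, he, RingHom.map_det] at h2
    have h3 : e.mapMatrix (M.submatrix Fin.succ Fin.succ) = W.submatrix Fin.succ Fin.succ := by
      rw [← he]; rfl
    rw [h3, h0, zero_dvd_iff] at h2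
    rw [h2] at h1
    simp at h1

/-- generic matrix -/
noncomputable abbrev auxG (R : Type*) [CommRing R] (n : ℕ) :
    Matrix (Fin n) (Fin n) (MvPolynomial (Fin n × Fin n) R) :=
  Matrix.of fun i j => X (i, j)

/-- the defining polynomial `det - u` -/
noncomputable abbrev auxD (R : Type*) [CommRing R] (n : ℕ) (u : R) :
    MvPolynomial (Fin n × Fin n) R := (auxG R n).det - C u

/-- the ring `R[x_ij]/(det - u)` -/
abbrev AuxA (R : Type*) [CommRing R] (n : ℕ) (u : R) :=
  MvPolynomial (Fin n × Fin n) R ⧸ Ideal.span {auxD R n u}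

theorem aux_G_mem {R : Type*} [CommRing R] [Nontrivial R] {n : ℕ} (a b i j : Fin n)
    (h : (i, j) ≠ (a, b)) : auxG R n i j ∈ supported R ({(a, b)}ᶜ : Set (Fin n × Fin n)) :=
  X_mem_supported.2 h

theorem aux_tail_not_dvd {R : Type*} [CommRing R] [Nontrivial R] {n k : ℕ} (u : R)
    (hu : IsUnit u) (M : Matrix (Fin (k+1)) (Fin (k+1)) (MvPolynomial (Fin n × Fin n) R))
    (r : MvPolynomial (Fin n × Fin n) R) (hM : ∀ i j, eval (fun _ => (0:R)) (M i j) = 0)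
    (hr : eval (fun _ => (0:R)) r = 0) : ¬ M.det ∣ r - C u := by
  intro hd
  have h2 := map_dvd (eval (fun _ => (0:R))) hd
  rw [RingHom.map_det, map_sub, hr, eval_C] at h2
  have h3 : (eval (fun _ => (0:R))).mapMatrix M = 0 := by
    ext i j : 2; exact hM i j
  rw [h3, Matrix.det_zero, zero_dvd_iff] at h2
  simp at h2
  exact hu.ne_zero h2

theorem aux_C_mem {R σ : Type*} [CommRing R] (T : Subalgebra R (MvPolynomial σ R)) (u : R) :
    C u ∈ T := T.algebraMap_mem u

theorem aux_D_prime {R : Type*} [CommRing R] [IsDomain R] [UniqueFactorizationMonoid R]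
    (k : ℕ) (u : R) (hu : IsUnit u) : Prime (auxD R (k+2) u) := by
  rw [auxD, aux_det_expand, add_sub_assoc]
  refine aux_prime_linear _ _ _ (aux_det_mem _ _ fun i j => aux_G_mem _ _ _ _ (by simp))
    (sub_mem (aux_tail_mem _ _ fun i j h => aux_G_mem _ _ _ _ h) (aux_C_mem _ _)) ?_ ?_
  · refine aux_det_prime k (fun i j => (i.succ, j.succ)) ?_
    rintro ⟨a, b⟩ ⟨c, d⟩ h
    simpa using h
  · refine aux_tail_not_dvd u hu _ _ (by simp) ?_
    rw [aux_tail_map]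
    simp [auxTail]

theorem aux_D0_prime {R : Type*} [CommRing R] [IsDomain R] [UniqueFactorizationMonoid R]
    (k : ℕ) (u : R) (hu : IsUnit u) : Prime (auxTail (auxG R (k+2)) - C u) := by
  have hmp : Prime ((auxG R (k+2)).submatrix Fin.succ (Fin.succ 0).succAbove).det := by
    refine aux_det_prime k (fun i j => (i.succ, (Fin.succ 0).succAbove j)) ?_
    rintro ⟨a, b⟩ ⟨c, d⟩ h
    simpa using h
  have key : auxTail (auxG R (k+2)) - C u =
      -(((auxG R (k+2)).submatrix Fin.succ (Fin.succ 0).succAbove).det * X (0, Fin.succ 0) +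
        (-(∑ j : Fin k, (-1) ^ (j.succ.succ : ℕ) * auxG R (k+2) 0 j.succ.succ *
          ((auxG R (k+2)).submatrix Fin.succ j.succ.succ.succAbove).det) - C (-u))) := by
    rw [auxTail, Fin.sum_univ_succ]
    simp only [Matrix.of_apply, map_neg, Fin.val_succ, Fin.val_zero]
    ring
  rw [key]
  refine Prime.neg ?_
  refine aux_prime_linear _ _ _ (aux_det_mem _ _ fun i j => aux_G_mem _ _ _ _ (by simp))
    (sub_mem (neg_mem (sum_mem fun j _ => ?_)) (aux_C_mem _ _)) hmp ?_
  · refine mul_mem (mul_mem (pow_mem (neg_mem (one_mem _)) _) (aux_G_mem _ _ _ _ (by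
      simp [Fin.ext_iff]))) ?_
    exact aux_det_mem _ _ fun a b => aux_G_mem _ _ _ _ (by simp)
  · refine aux_tail_not_dvd (-u) hu.neg _ _ (by simp) ?_
    simp

/-- set a variable to zero -/
noncomputable def auxEps {R σ : Type*} [CommRing R] [DecidableEq σ] (s : σ) :
    MvPolynomial σ R →ₐ[R] MvPolynomial σ R :=
  aeval fun t => if t = s then 0 else X t

theorem auxEps_fix {R σ : Type*} [CommRing R] [DecidableEq σ] (s : σ) (p : MvPolynomial σ R)
    (h : p ∈ supported R ({s}ᶜ : Set σ)) : auxEps s p = p := by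
  rw [supported] at h
  induction h using Algebra.adjoin_induction with
  | mem x hx =>
    obtain ⟨t, ht, rfl⟩ := hx
    have : t ≠ s := ht
    simp [auxEps, this]
  | algebraMap r => simp
  | add x y _ _ hx hy => simp [hx, hy]
  | mul x y _ _ hx hy => simp [hx, hy]

theorem auxEps_sub {R σ : Type*} [CommRing R] [DecidableEq σ] (s : σ) (p : MvPolynomial σ R) :
    X s ∣ p - auxEps s p := by
  induction p using MvPolynomial.induction_on with
  | C a => simp [auxEps]
  | add p q hp hq =>
    rw [map_add, add_sub_add_comm]; exact dvd_add hp hq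
  | mul_X p t hp =>
    by_cases h : t = s
    · subst h; simp [auxEps]
    · simp only [map_mul]
      rw [show auxEps s (X t : MvPolynomial σ R) = X t by simp [auxEps, h], ← sub_mul]
      exact hp.mul_right _

theorem aux_x_prime {R : Type*} [CommRing R] [IsDomain R] [UniqueFactorizationMonoid R]
    (k : ℕ) (u : R) (hu : IsUnit u) :
    Prime (Ideal.Quotient.mk (Ideal.span {auxD R (k+2) u}) (X (0, 0))) := by
  have hD := aux_D_prime k u hu
  have hD0 := aux_D0_prime k u hu
  set D := auxD R (k+2) u with hDdef
  set D0 := auxTail (auxG R (k+2)) - C u with hD0def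
  let ε := auxEps (R := R) ((0, 0) : Fin (k+2) × Fin (k+2))
  have hεX : ε (X (0, 0)) = 0 := by simp [ε, auxEps]
  have hDD : D = (X (0, 0)) * ((auxG R (k+2)).submatrix Fin.succ Fin.succ).det + D0 := by
    rw [hDdef, hD0def, auxD, aux_det_expand]
    change _ * X (0, 0) + _ - _ = _
    ring
  have hε0 : ε D0 = D0 := auxEps_fix _ _
    (sub_mem (aux_tail_mem _ _ fun i j h => aux_G_mem _ _ _ _ h) (aux_C_mem _ _))
  have hεD : ε D = D0 := by rw [hDD, map_add, map_mul, hεX, hε0]; ring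
  have hdvd : ∀ f, Ideal.Quotient.mk (Ideal.span {D}) (X (0, 0)) ∣ Ideal.Quotient.mk _ f ↔
      D0 ∣ ε f := by
    intro f
    constructor
    · rintro ⟨c, hc⟩
      obtain ⟨c, rfl⟩ := Ideal.Quotient.mk_surjective c
      rw [← map_mul, Ideal.Quotient.mk_eq_mk_iff_sub_mem, Ideal.mem_span_singleton] at hc
      have := map_dvd ε hc
      rw [hεD, map_sub, map_mul, hεX] at this
      simpa using this
    · rintro ⟨c, hc⟩
      obtain ⟨b, hb⟩ := auxEps_sub (0, 0) f
      change f - ε f = _ at hb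
      refine ⟨Ideal.Quotient.mk _ (b - ((auxG R (k+2)).submatrix Fin.succ Fin.succ).det * c), ?_⟩
      rw [← map_mul, Ideal.Quotient.mk_eq_mk_iff_sub_mem, Ideal.mem_span_singleton]
      refine ⟨c, ?_⟩
      rw [hDD]
      linear_combination hb + hc
  refine ⟨?_, ?_, ?_⟩
  · intro h0
    rw [Ideal.Quotient.eq_zero_iff_mem, Ideal.mem_span_singleton] at h0
    have h1 := (hD.irreducible.associated_of_dvd X_prime.irreducible h0)
    have h2 := map_dvd ε h1.symm.dvd
    rw [hεX, hεD, zero_dvd_iff] at h2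
    exact hD0.ne_zero h2
  · intro h
    have := (hdvd 1).1 (h.dvd)
    rw [map_one] at this
    exact hD0.not_isUnit (isUnit_of_dvd_one this)
  · intro a b hab
    obtain ⟨a, rfl⟩ := Ideal.Quotient.mk_surjective a
    obtain ⟨b, rfl⟩ := Ideal.Quotient.mk_surjective b
    rw [← map_mul, hdvd, map_mul] at hab
    rw [hdvd, hdvd]
    exact hD0.dvd_or_dvd hab

theorem aux_schur {S : Type*} [CommRing S] {k : ℕ} (M : Matrix (Fin (k+1)) (Fin (k+1)) S) (t : S)
    (ht : M 0 0 * t = 1) : M.det = M 0 0 * (Matrix.of fun i j : Fin k =>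
      M i.succ j.succ - M i.succ 0 * t * M 0 j.succ).det := by
  let N : Matrix (Fin (k+1)) (Fin (k+1)) S := fun i j =>
    M i j - (Fin.cases 0 (fun i' => M i'.succ 0 * t) i : S) * M 0 j
  have h1 : M.det = N.det := by
    refine Matrix.det_eq_of_forall_row_eq_smul_add_const
      (fun i => (Fin.cases 0 (fun i' => M i'.succ 0 * t) i : S)) 0 rfl ?_
    intro i j
    simp [N]
  rw [h1, Matrix.det_succ_column_zero, Fin.sum_univ_succ, Finset.sum_eq_zero, add_zero]
  · simp only [Fin.val_zero, pow_zero, one_mul, Fin.succAbove_zero]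
    congr 1
    simp [N]
  · intro i _
    have : N i.succ 0 = 0 := by
      simp only [N, Fin.cases_succ]
      linear_combination (- M i.succ 0) * ht
    rw [this]; ring

/-- universal property of `AuxA` -/
noncomputable def auxLift {R S : Type*} [CommRing R] [CommRing S] {n : ℕ} {u : R} (g : R →+* S)
    (M : Matrix (Fin n) (Fin n) S) (h : M.det = g u) : AuxA R n u →+* S :=
  Ideal.Quotient.lift _ (eval₂Hom g fun p => M p.1 p.2) (by
    intro a ha
    rw [Ideal.mem_span_singleton] at ha
    obtain ⟨c, rfl⟩ := ha
    rw [map_mul, map_sub, RingHom.map_det]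
    have : (eval₂Hom g fun p : Fin n × Fin n => M p.1 p.2).mapMatrix (auxG R n) = M := by
      ext i j; simp
    rw [this, h]; simp)

/-- scalars -/
noncomputable def auxC {R : Type*} [CommRing R] {n : ℕ} {u : R} : R →+* AuxA R n u :=
  (Ideal.Quotient.mk _).comp C

/-- generators -/
noncomputable def auxX {R : Type*} [CommRing R] {n : ℕ} {u : R} :
    Matrix (Fin n) (Fin n) (AuxA R n u) :=
  Matrix.of fun i j => Ideal.Quotient.mk _ (X (i, j))

theorem aux_det_X {R : Type*} [CommRing R] {n : ℕ} {u : R} :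
    (auxX : Matrix (Fin n) (Fin n) (AuxA R n u)).det = auxC u := by
  have : (auxX : Matrix (Fin n) (Fin n) (AuxA R n u)) =
    (Ideal.Quotient.mk (Ideal.span {auxD R n u})).mapMatrix (auxG R n) := rfl
  rw [this, ← RingHom.map_det]
  refine (Ideal.Quotient.mk_eq_mk_iff_sub_mem _ _).2 ?_
  exact Ideal.mem_span_singleton_self _

@[simp] theorem auxLift_C {R S : Type*} [CommRing R] [CommRing S] {n : ℕ} {u : R} (g : R →+* S)
    (M : Matrix (Fin n) (Fin n) S) (h : M.det = g u) (r : R) : auxLift g M h (auxC r) = g r := by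
  simp [auxLift, auxC]

@[simp] theorem auxLift_X {R S : Type*} [CommRing R] [CommRing S] {n : ℕ} {u : R} (g : R →+* S)
    (M : Matrix (Fin n) (Fin n) S) (h : M.det = g u) (i j) :
    auxLift g M h (auxX i j) = M i j := by
  simp [auxLift, auxX]

theorem aux_hom_ext {R S : Type*} [CommRing R] [CommRing S] {n : ℕ} {u : R}
    {f g : AuxA R n u →+* S} (h1 : ∀ r, f (auxC r) = g (auxC r))
    (h2 : ∀ i j, f (auxX i j) = g (auxX i j)) : f = g := by
  refine Ideal.Quotient.ringHom_ext (MvPolynomial.ringHom_ext h1 fun p => h2 p.1 p.2)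

/-- the base ring after inverting the corner entry -/
abbrev AuxR (R : Type*) [CommRing R] (k : ℕ) :=
  Localization.Away (X none : MvPolynomial (Option (Fin k ⊕ Fin k)) R)

/-- scalars -/
noncomputable def auxRC {R : Type*} [CommRing R] {k : ℕ} : R →+* AuxR R k :=
  (algebraMap (MvPolynomial (Option (Fin k ⊕ Fin k)) R) _).comp C

/-- generators -/
noncomputable def auxRX {R : Type*} [CommRing R] {k : ℕ} (s : Option (Fin k ⊕ Fin k)) : AuxR R k :=
  algebraMap _ _ (X s : MvPolynomial (Option (Fin k ⊕ Fin k)) R)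

/-- inverse of the corner -/
noncomputable def auxRinv {R : Type*} [CommRing R] {k : ℕ} : AuxR R k :=
  IsLocalization.Away.invSelf (X none : MvPolynomial (Option (Fin k ⊕ Fin k)) R)

theorem aux_mul_inv {R : Type*} [CommRing R] {k : ℕ} :
    (auxRX none : AuxR R k) * auxRinv = 1 :=
  IsLocalization.Away.mul_invSelf (X none : MvPolynomial (Option (Fin k ⊕ Fin k)) R)

/-- universal property -/
noncomputable def auxRLift {R S : Type*} [CommRing R] [CommRing S] {k : ℕ} (g : R →+* S)
    (v : Option (Fin k ⊕ Fin k) → S) (h : IsUnit (v none)) : AuxR R k →+* S :=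
  IsLocalization.Away.lift (X none : MvPolynomial (Option (Fin k ⊕ Fin k)) R)
    (g := eval₂Hom g v) (by simpa using h)

@[simp] theorem auxRLift_C {R S : Type*} [CommRing R] [CommRing S] {k : ℕ} (g : R →+* S)
    (v : Option (Fin k ⊕ Fin k) → S) (h : IsUnit (v none)) (r : R) :
    auxRLift g v h (auxRC r) = g r := by
  simp [auxRLift, auxRC]

@[simp] theorem auxRLift_X {R S : Type*} [CommRing R] [CommRing S] {k : ℕ} (g : R →+* S)
    (v : Option (Fin k ⊕ Fin k) → S) (h : IsUnit (v none)) (s) :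
    auxRLift g v h (auxRX s) = v s := by
  simp [auxRLift, auxRX]

theorem auxR_hom_ext {R S : Type*} [CommRing R] [CommRing S] {k : ℕ}
    {f g : AuxR R k →+* S} (h1 : ∀ r, f (auxRC r) = g (auxRC r))
    (h2 : ∀ s, f (auxRX s) = g (auxRX s)) : f = g := by
  refine IsLocalization.ringHom_ext (Submonoid.powers (X none : MvPolynomial (Option (Fin k ⊕ Fin k)) R)) ?_
  exact MvPolynomial.ringHom_ext h1 h2

theorem aux_hom_inv {R S : Type*} [CommRing R] [CommRing S] {k : ℕ} (f : AuxR R k →+* S) (t : S)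
    (h : f (auxRX none) * t = 1) : f auxRinv = t := by
  have h2 : f (auxRX none) * f auxRinv = 1 := by rw [← map_mul, aux_mul_inv, map_one]
  linear_combination t * h2 - f auxRinv * h

/-- the new constant -/
noncomputable def auxU {R : Type*} [CommRing R] (k : ℕ) (u : R) : AuxR R k := auxRC u * auxRinv

/-- the big matrix over the small ring -/
noncomputable def auxBig {R : Type*} [CommRing R] (k : ℕ) (u : R) :
    Matrix (Fin (k+1)) (Fin (k+1)) (AuxA (AuxR R k) k (auxU k u)) :=
  Matrix.of fun i j => Fin.cases (Fin.cases (auxC (auxRX none)) (fun j => auxC (auxRX (some (.inl j)))) j)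
    (fun i => Fin.cases (auxC (auxRX (some (.inr i))))
      (fun j => auxX i j + auxC (auxRX (some (.inr i))) * auxC auxRinv * auxC (auxRX (some (.inl j)))) j) i

theorem aux_det_big {R : Type*} [CommRing R] (k : ℕ) (u : R) :
    (auxBig k u).det = auxC (auxRC u) := by
  have h1 : auxBig k u 0 0 * auxC auxRinv = 1 := by
    simp only [auxBig, Matrix.of_apply, Fin.cases_zero]
    rw [← map_mul, aux_mul_inv, map_one]
  rw [aux_schur _ _ h1]
  have : (Matrix.of fun i j : Fin k => auxBig k u i.succ j.succ -
      auxBig k u i.succ 0 * auxC auxRinv * auxBig k u 0 j.succ) = auxX := by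
    ext i j
    simp [auxBig]
  have hU : (auxC (auxU k u) : AuxA (AuxR R k) k (auxU k u)) = auxC (auxRC u) * auxC auxRinv := by
    rw [← map_mul]; rfl
  rw [this, aux_det_X, hU]
  linear_combination auxC (auxRC u) * h1

theorem aux_step {R : Type*} [CommRing R] (k : ℕ) (u : R) :
    Nonempty (Localization.Away (auxX 0 0 : AuxA R (k+1) u) ≃+* AuxA (AuxR R k) k (auxU k u)) := by
  set x : AuxA R (k+1) u := auxX 0 0 with hx
  let ι : AuxA R (k+1) u →+* Localization.Away x := algebraMap _ _
  let t : Localization.Away x := IsLocalization.Away.invSelf x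
  have ht : ι x * t = 1 := IsLocalization.Away.mul_invSelf x
  let Φ0 : AuxA R (k+1) u →+* AuxA (AuxR R k) k (auxU k u) :=
    auxLift (auxC.comp auxRC) (auxBig k u) (aux_det_big k u)
  have hb : auxBig k u 0 0 = auxC (auxRX none) := rfl
  have hΦ0 : IsUnit (Φ0 x) := by
    have h1 : Φ0 x * auxC auxRinv = 1 := by
      simp only [Φ0, hx, auxLift_X, hb]
      rw [← map_mul, aux_mul_inv, map_one]
    exact IsUnit.of_mul_eq_one _ h1
  let Φ : Localization.Away x →+* AuxA (AuxR R k) k (auxU k u) := IsLocalization.Away.lift x hΦ0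
  have hΦ : ∀ a, Φ (ι a) = Φ0 a := fun a => IsLocalization.Away.lift_eq x hΦ0 a
  let Ψ0 : AuxR R k →+* Localization.Away x :=
    auxRLift (ι.comp auxC) (fun s => s.elim (ι x) (Sum.elim (fun j => ι (auxX 0 j.succ))
      (fun i => ι (auxX i.succ 0)))) (IsUnit.of_mul_eq_one _ ht)
  have hΨ0none : Ψ0 (auxRX none) = ι x := by simp [Ψ0]
  have hΨ0inv : Ψ0 auxRinv = t := aux_hom_inv _ _ (by rw [hΨ0none, ht])
  let Y : Matrix (Fin k) (Fin k) (Localization.Away x) := Matrix.of fun i j =>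
    ι (auxX i.succ j.succ) - ι (auxX i.succ 0) * t * ι (auxX 0 j.succ)
  have hY : Y.det = Ψ0 (auxU k u) := by
    have h1 := aux_schur (ι.mapMatrix auxX) t ht
    rw [← RingHom.map_det, aux_det_X] at h1
    change ι (auxC u) = ι x * Y.det at h1
    rw [auxU, map_mul, hΨ0inv]
    have h2 : Ψ0 (auxRC u) = ι (auxC u) := by simp [Ψ0]
    rw [h2]
    linear_combination (-Y.det) * ht - t * h1
  let Ψ : AuxA (AuxR R k) k (auxU k u) →+* Localization.Away x := auxLift Ψ0 Y hY
  refine ⟨RingEquiv.ofRingHom Φ Ψ ?_ ?_⟩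
  · refine aux_hom_ext (fun r => ?_) (fun i j => ?_)
    · have : (Φ.comp Ψ0) = auxC := by
        refine auxR_hom_ext (fun r => ?_) (fun s => ?_)
        · simp [Ψ0, hΦ, Φ0]
        · rcases s with _ | j | i
          · simp [Ψ0, hΦ, Φ0, hx, hb]
          · simp [Ψ0, hΦ, Φ0, auxBig]
          · simp [Ψ0, hΦ, Φ0, auxBig]
      have := congrArg (fun f => f r) this
      simpa [Ψ] using this
    · have hΦt : Φ t = auxC auxRinv := by
        have h1 : Φ (ι x) * Φ t = 1 := by rw [← map_mul, ht, map_one]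
        have h2 : Φ (ι x) = auxC (auxRX none) := by simp [hΦ, Φ0, hx, hb]
        have h3 : (auxC (auxRX none) : AuxA (AuxR R k) k (auxU k u)) * auxC auxRinv = 1 := by
          rw [← map_mul, aux_mul_inv, map_one]
        rw [h2] at h1
        linear_combination (auxC auxRinv) * h1 - Φ t * h3
      simp [Ψ, Y, hΦ, hΦt, Φ0, auxBig]
  · refine IsLocalization.ringHom_ext (Submonoid.powers x) ?_
    refine aux_hom_ext (fun r => ?_) (fun i j => ?_)
    · change Ψ (Φ (ι _)) = ι _
      simp [hΦ, Φ0, Ψ, Ψ0]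
    · change Ψ (Φ (ι _)) = ι _
      rw [hΦ]
      simp only [Φ0, auxLift_X]
      refine Fin.cases (Fin.cases ?_ (fun j => ?_) j) (fun i => Fin.cases ?_ (fun j => ?_) j) i
      · simp [auxBig, Ψ, Ψ0, hx]
      · simp [auxBig, Ψ, Ψ0]
      · simp [auxBig, Ψ, Ψ0]
      · simp only [auxBig, Ψ, Matrix.of_apply, Fin.cases_succ, map_add, map_mul, auxLift_X,
          auxLift_C, hΨ0inv]
        simp [Ψ0, Y]

theorem aux_ufd (k : ℕ) : ∀ (R : Type u) [CommRing R] [IsDomain R] [IsNoetherianRing R]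
    [UniqueFactorizationMonoid R] (u : R), IsUnit u →
    UniqueFactorizationMonoid (AuxA R (k+1) u) := by
  induction k with
  | zero =>
    intro R _ _ _ _ u hu
    let f : AuxA R 1 u →+* R := auxLift (RingHom.id R) (Matrix.of fun _ _ => u) (by simp)
    have e : AuxA R 1 u ≃+* R := RingEquiv.ofRingHom f auxC (by ext r; simp [f]) (by
      refine aux_hom_ext (fun r => by simp [f]) (fun i j => ?_)
      have := aux_det_X (R := R) (n := 1) (u := u)
      rw [Matrix.det_fin_one] at this
      obtain rfl := Subsingleton.elim i 0
      obtain rfl := Subsingleton.elim j 0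
      simp [f, this])
    exact e.symm.toMulEquiv.uniqueFactorizationMonoid inferInstance
  | succ k ih =>
    intro R _ _ _ _ u hu
    have hD := aux_D_prime k u hu
    have : (Ideal.span {auxD R (k+2) u}).IsPrime :=
      (Ideal.span_singleton_prime hD.ne_zero).2 hD
    have hx := aux_x_prime k u hu
    rw [UniqueFactorizationMonoid.iff_localizationAway_of_prime hx]
    have : IsDomain (AuxR R (k+1)) := IsLocalization.Away.isDomain (x := (X none : MvPolynomial (Option (Fin (k+1) ⊕ Fin (k+1))) R)) _ X_prime.ne_zero
    have : IsNoetherianRing (AuxR R (k+1)) := IsLocalization.isNoetherianRing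
      (Submonoid.powers (X none : MvPolynomial (Option (Fin (k+1) ⊕ Fin (k+1))) R)) _ inferInstance
    obtain ⟨e⟩ := aux_step (k+1) u
    refine e.symm.toMulEquiv.uniqueFactorizationMonoid (ih (AuxR R (k+1)) _ ?_)
    exact (hu.map auxRC).mul (IsUnit.of_mul_eq_one _ (by rw [mul_comm]; exact aux_mul_inv))

theorem aux_irred {K : Type*} [Field K] (k : ℕ) (hk : k + 1 ≤ k + 2) :
    Irreducible (Ideal.Quotient.mk (Ideal.span {auxD K (k+2) 1}) (genDelta K (k+2) (k+1) hk)) := by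
  set s : Fin (k+2) × Fin (k+2) := (Fin.last _, Fin.last _) with hs
  set d := genDelta K (k+2) (k+1) hk with hd
  have hdG : d = ((auxG K (k+2)).submatrix Fin.castSucc Fin.castSucc).det := rfl
  set D := auxD K (k+2) 1 with hDdef
  have hDp : Prime D := aux_D_prime k 1 isUnit_one
  have hdp : Prime d := by
    refine aux_det_prime k (fun i j => (i.castSucc, j.castSucc)) ?_
    rintro ⟨a, b⟩ ⟨c, d⟩ h
    simpa using h
  have hdm : d ∈ supported K ({s}ᶜ : Set _) := by
    rw [hdG]
    exact aux_det_mem _ _ fun i j => aux_G_mem _ _ _ _ (by simp [Fin.ext_iff]; omega)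
  obtain ⟨r, hr, hDr⟩ : ∃ r ∈ supported K ({s}ᶜ : Set _), D = d * X s - r := by
    refine ⟨-(∑ j : Fin (k+1), (-1) ^ ((Fin.last (k+1) : ℕ) + (j.castSucc : ℕ)) *
      auxG K (k+2) (Fin.last _) j.castSucc * ((auxG K (k+2)).submatrix (Fin.last _).succAbove
        j.castSucc.succAbove).det - C 1), ?_, ?_⟩
    · refine neg_mem (sub_mem (sum_mem fun j _ => ?_) (aux_C_mem _ _))
      refine mul_mem (mul_mem (pow_mem (neg_mem (one_mem _)) _) (aux_G_mem _ _ _ _ ?_)) ?_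
      · simp [Fin.ext_iff]; omega
      · refine aux_det_mem _ _ fun a b => aux_G_mem _ _ _ _ ?_
        simp [Fin.ext_iff]; omega
    · rw [hDdef, auxD, Matrix.det_succ_row _ (Fin.last _), Fin.sum_univ_castSucc]
      have h1 : (-1 : MvPolynomial (Fin (k+2) × Fin (k+2)) K) ^
          ((Fin.last (k+1) : ℕ) + (Fin.last (k+1) : ℕ)) = 1 := Even.neg_one_pow ⟨_, rfl⟩
      rw [h1, Fin.succAbove_last, ← hdG]
      change _ + 1 * X s * d - C 1 = _
      ring
  let q := Ideal.Quotient.mk (Ideal.span {D})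
  have hq0 : ∀ f, q f = 0 ↔ D ∣ f := fun f => by
    rw [Ideal.Quotient.eq_zero_iff_mem, Ideal.mem_span_singleton]
  have hqs : q d * q (X s) = q r := by
    rw [← map_mul, ← sub_eq_zero, ← map_sub, hq0, ← hDr]
  have : (Ideal.span {D}).IsPrime := (Ideal.span_singleton_prime hDp.ne_zero).2 hDp
  have hinj : ∀ p ∈ supported K ({s}ᶜ : Set _), q p = 0 → p = 0 := by
    intro p hp h0
    by_contra hne
    rw [hq0] at h0
    obtain ⟨c, hc⟩ := h0
    have hc0 : c ≠ 0 := by rintro rfl; simp [hc] at hne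
    have h1 := congrArg (degreeOf s) hc
    rw [degreeOf_mul_eq hDp.ne_zero hc0] at h1
    have h2 : ∀ f ∈ supported K ({s}ᶜ : Set _), degreeOf s f = 0 := fun f hf =>
      by
        classical
        rw [degreeOf_def, Multiset.count_eq_zero, ← Multiset.mem_toFinset, ← vars_def]
        exact aux_notin_vars hf
    rw [h2 p hp] at h1
    have h3 : degreeOf s (D + r) = degreeOf s (d * X s) := by rw [hDr]; ring_nf
    rw [degreeOf_mul_eq hdp.ne_zero (X_ne_zero _), degreeOf_X_self] at h3
    have h4 := degreeOf_add_le s D r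
    rw [h2 r hr] at h4
    omega
  have hrep : ∀ f, ∃ N, ∃ p ∈ supported K ({s}ᶜ : Set _), q d ^ N * q f = q p := by
    intro f
    induction f using MvPolynomial.induction_on with
    | C a => exact ⟨0, C a, aux_C_mem _ _, by simp⟩
    | add f g hf hg =>
      obtain ⟨N, p, hp, h1⟩ := hf
      obtain ⟨N', p', hp', h2⟩ := hg
      refine ⟨N + N', d ^ N' * p + d ^ N * p', add_mem (mul_mem (pow_mem hdm _) hp)
        (mul_mem (pow_mem hdm _) hp'), ?_⟩
      simp only [map_add, map_mul, map_pow]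
      rw [← h1, ← h2]
      ring
    | mul_X f t hf =>
      obtain ⟨N, p, hp, h1⟩ := hf
      by_cases ht : t = s
      · subst ht
        refine ⟨N + 1, p * r, mul_mem hp hr, ?_⟩
        rw [map_mul, map_mul, ← h1, ← hqs]
        ring
      · refine ⟨N, p * X t, mul_mem hp (X_mem_supported.2 ht), ?_⟩
        rw [map_mul, map_mul, ← h1]
        ring
  have hqd0 : q d ≠ 0 := fun h => hdp.ne_zero (hinj d hdm h)
  -- key cancellation
  have hkey : ∀ (a p : _) (i e : ℕ), e ≤ i → q d ^ i * a = q p → Associated p (d ^ e) →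
      IsUnit a := by
    intro a p i e hei h1 h2
    obtain ⟨w, hw⟩ := h2.symm
    rw [← hw, map_mul, map_pow] at h1
    obtain ⟨c, rfl⟩ := Nat.exists_eq_add_of_le hei
    rw [pow_add, mul_assoc] at h1
    have h3 := mul_left_cancel₀ (pow_ne_zero _ hqd0) h1
    exact isUnit_of_dvd_unit ⟨_, (mul_comm _ _).trans h3 |>.symm⟩ (w.isUnit.map q)
  refine ⟨?_, ?_⟩
  · intro hun
    let W : Matrix (Fin (k+2)) (Fin (k+2)) K :=
      (Matrix.of fun i j => if i = 0 then - (1 : Matrix (Fin (k+2)) (Fin (k+2)) K) i j else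
        (1 : Matrix (Fin (k+2)) (Fin (k+2)) K) i j).submatrix (Equiv.swap 0 (Fin.last _)) id
    have hW : W.det = 1 := by
      have h1 : (Matrix.of fun i j => if i = 0 then - (1 : Matrix (Fin (k+2)) (Fin (k+2)) K) i j else
        (1 : Matrix (Fin (k+2)) (Fin (k+2)) K) i j) =
        Matrix.diagonal (fun i => if i = 0 then (-1 : K) else 1) := by
        ext i j
        by_cases h : i = 0 <;> by_cases h' : i = j <;> simp [h, h', Matrix.one_apply, Matrix.diagonal_apply] <;> aesop
      have h2 : (0 : Fin (k+2)) ≠ Fin.last _ := by simp [Fin.ext_iff]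
      simp only [W, Matrix.det_permute, h1, Matrix.det_diagonal, Equiv.Perm.sign_swap h2]
      simp
    let φ := auxLift (u := (1:K)) (RingHom.id K) W (by simp [hW])
    have h3 : φ (q d) = (W.submatrix Fin.castSucc Fin.castSucc).det := by
      change eval₂Hom _ _ d = _
      rw [hdG, RingHom.map_det]
      congr 1
      ext i j
      simp
    have h4 : (W.submatrix Fin.castSucc Fin.castSucc).det = 0 := by
      apply Matrix.det_eq_zero_of_row_eq_zero 0
      intro j
      have h0 : (Fin.last (k+1) : Fin (k+2)) ≠ 0 := by simp [Fin.ext_iff]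
      have h1 : (Fin.last (k+1) : Fin (k+2)) ≠ j.castSucc := by simp [Fin.ext_iff]; omega
      simp only [W, Matrix.submatrix_apply, Matrix.of_apply, Fin.castSucc_zero,
        Equiv.swap_apply_left, id, if_neg h0, Matrix.one_apply_ne h1]
    have h5 := hun.map φ
    change IsUnit (φ (q d)) at h5
    rw [h3, h4] at h5
    exact not_isUnit_zero h5
  · intro a b hab
    change q d = a * b at hab
    obtain ⟨a', rfl⟩ := Ideal.Quotient.mk_surjective a
    obtain ⟨b', rfl⟩ := Ideal.Quotient.mk_surjective b
    obtain ⟨i, p, hp, h1⟩ := hrep a'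
    obtain ⟨j, p', hp', h2⟩ := hrep b'
    have h3 : p * p' = d ^ (i + j + 1) := by
      rw [← sub_eq_zero]
      refine hinj _ (sub_mem (mul_mem hp hp') (pow_mem hdm _)) ?_
      rw [map_sub, map_mul, map_pow, ← h1, ← h2, sub_eq_zero, pow_succ, pow_add]
      nth_rewrite 5 [hab]
      ring
    obtain ⟨e, he, hpe⟩ := (dvd_prime_pow hdp _).1 ⟨_, h3.symm⟩
    obtain ⟨e', he', hpe'⟩ := (dvd_prime_pow hdp _).1 (⟨p, by rw [← h3, mul_comm]⟩ : p' ∣ d ^ (i+j+1))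
    have hsum : e + e' = i + j + 1 := by
      have h4 := hpe.mul_mul hpe'
      rw [h3, ← pow_add] at h4
      have h5 := (pow_dvd_pow_iff hdp.ne_zero hdp.not_isUnit).1 h4.dvd
      have h6 := (pow_dvd_pow_iff hdp.ne_zero hdp.not_isUnit).1 h4.symm.dvd
      omega
    by_cases hle : e ≤ i
    · exact .inl (hkey _ _ _ _ hle h1 hpe)
    · exact .inr (hkey _ _ _ _ (by omega) h2 hpe')

/-- for an algebraically closed field `K` and `n ≥ 2`, the coordinate ring
`K[SL_n] = K[Mat_n]/(det - 1)` is a unique factorisation domain, and the image `Δ'_{n-1}`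
of the `(n-1)`-th principal minor in `K[SL_n]` is an irreducible element. -/
theorem stmt1 (K : Type*) [Field K] [IsAlgClosed K] (n : ℕ) (hn : 2 ≤ n) :
    ∃ _ : IsDomain (MvPolynomial (Fin n × Fin n) K ⧸ Ideal.span {genDet K n - 1}),
      UniqueFactorizationMonoid
        (MvPolynomial (Fin n × Fin n) K ⧸ Ideal.span {genDet K n - 1}) ∧
      Irreducible
        (Ideal.Quotient.mk (Ideal.span {genDet K n - 1})
          (genDelta K n (n - 1) (by omega))) := by
  obtain ⟨k, rfl⟩ := Nat.exists_eq_add_of_le' hn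
  have hE : genDet K (k+2) - 1 = auxD K (k+2) 1 := by
    rw [auxD, C_1]; rfl
  rw [hE]
  have hD := aux_D_prime k (1 : K) isUnit_one
  have : (Ideal.span {auxD K (k+2) 1}).IsPrime :=
      (Ideal.span_singleton_prime hD.ne_zero).2 hD
  exact ⟨inferInstance, aux_ufd (k+1) K 1 isUnit_one, aux_irred k _⟩
end

section
/- Let K be an algebraically closed field and n ≥ 2. The only invertible elements of K[SL_n] are the nonzero scalars. -/
open MvPolynomial

theorem aeval_genDet {K S : Type*} [CommRing K] [CommRing S] [Algebra K S] (n : ℕ)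
    (B : Matrix (Fin n) (Fin n) S) :
    aeval (fun ij : Fin n × Fin n => B ij.1 ij.2) (genDet K n) = B.det := by
  unfold genDet
  rw [AlgHom.map_det]
  congr 1
  ext i j
  simp

/-- The derivation scaling the row `i₀`. -/
noncomputable def rowEuler (K : Type*) [CommRing K] (n : ℕ) (i₀ : Fin n) :
    Derivation K (MvPolynomial (Fin n × Fin n) K) (MvPolynomial (Fin n × Fin n) K) :=
  mkDerivation K (fun ij => if ij.1 = i₀ then X ij else 0)

theorem rowEuler_prod {K : Type*} [CommRing K] {n : ℕ} (i₀ : Fin n) (σ : Equiv.Perm (Fin n))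
    (s : Finset (Fin n)) :
    rowEuler K n i₀ (∏ i ∈ s, X (σ i, i)) =
      if σ.symm i₀ ∈ s then ∏ i ∈ s, X (σ i, i) else 0 := by
  classical
  induction s using Finset.induction_on with
  | empty => simp
  | insert a s ha ih =>
    rw [Finset.prod_insert ha, Derivation.leibniz, ih]
    simp only [rowEuler, mkDerivation_X, smul_eq_mul, Finset.mem_insert]
    by_cases h : σ a = i₀
    · have h2 : σ.symm i₀ = a := by rw [← h]; simp
      simp [h, h2, ha, mul_comm]
    · have h2 : ¬ σ.symm i₀ = a := by
        rintro rfl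
        simp at h
      simp [h, h2]

theorem rowEuler_genDet (K : Type*) [CommRing K] (n : ℕ) (i₀ : Fin n) :
    rowEuler K n i₀ (genDet K n) = genDet K n := by
  unfold genDet
  rw [Matrix.det_apply, map_sum]
  refine Finset.sum_congr rfl fun σ _ => ?_
  simp only [Matrix.of_apply]
  rcases Int.units_eq_one_or (Equiv.Perm.sign σ) with h | h <;>
    simp [h, rowEuler_prod]

theorem squarefree_genDet (K : Type*) [Field K] (n : ℕ) (i₀ : Fin n) :
    Squarefree (genDet K n - 1) := by
  rintro g ⟨h, hg⟩
  have h1 : g ∣ genDet K n := by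
    have := congrArg (rowEuler K n i₀) hg
    rw [map_sub, rowEuler_genDet, Derivation.map_one_eq_zero, sub_zero, Derivation.leibniz,
      Derivation.leibniz] at this
    rw [this]
    simp only [smul_eq_mul]
    exact ⟨g * rowEuler K n i₀ h + h * (rowEuler K n i₀ g + rowEuler K n i₀ g), by ring⟩
  have h2 : g ∣ genDet K n - 1 := ⟨g * h, by rw [hg, mul_assoc]⟩
  have h3 := dvd_sub h1 h2
  rw [sub_sub_cancel] at h3
  exact isUnit_of_dvd_one h3

open Matrix Matrix.SpecialLinearGroup in
theorem diag2n_decompose {ι F : Type*} [Fintype ι] [DecidableEq ι] [Field F] {i j : ι}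
    (hij : i ≠ j) (a : F) (ha : a ≠ 0) :
    diag2n hij a ha = SpecialLinearGroup.transvection hij a *
      SpecialLinearGroup.transvection hij.symm (- a⁻¹) *
      SpecialLinearGroup.transvection hij a *
      SpecialLinearGroup.transvection hij (-1) *
      SpecialLinearGroup.transvection hij.symm 1 *
      SpecialLinearGroup.transvection hij (-1) := by
  refine Subtype.ext ?_
  change Matrix.diagonal (fun k ↦ if k = i then a else if k = j then a⁻¹ else 1) =
    Matrix.transvection i j a * Matrix.transvection j i (-a⁻¹) * Matrix.transvection i j a *
      Matrix.transvection i j (-1) * Matrix.transvection j i 1 * Matrix.transvection i j (-1)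
  ext k l
  by_cases hli : l = i
  · subst hli
    by_cases hkl : k = l
    · subst hkl
      simp [hij, hij.symm, Matrix.transvection, Matrix.one_apply, Matrix.single_apply, ha, Matrix.mul_add, Matrix.add_mul]
    · by_cases hkj : k = j
      · subst hkj
        simp [hij, hij.symm, Matrix.transvection, Matrix.one_apply, Matrix.single_apply, ha, Matrix.mul_add, Matrix.add_mul]
      · simp [hij, hij.symm, Matrix.transvection, Matrix.one_apply, Matrix.single_apply, ha, Matrix.mul_add, Matrix.add_mul, hkl, hkj, Ne.symm hkl, Ne.symm hkj]
  · by_cases hlj : l = j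
    · subst hlj
      by_cases hkl : k = l
      · subst hkl
        simp [hij, hij.symm, Matrix.transvection, Matrix.one_apply, Matrix.single_apply, ha, Matrix.mul_add, Matrix.add_mul]
      · by_cases hki : k = i
        · subst hki
          simp [hij, hij.symm, Matrix.transvection, Matrix.one_apply, Matrix.single_apply, ha, Matrix.mul_add, Matrix.add_mul]
        · simp [hij, hij.symm, Matrix.transvection, Matrix.one_apply, Matrix.single_apply, ha, Matrix.mul_add, Matrix.add_mul, hkl, hki, Ne.symm hkl, Ne.symm hki]
    · by_cases hkl : k = l
      · subst hkl
        simp [hij, hij.symm, hli, hlj, Ne.symm hli, Ne.symm hlj, Matrix.transvection,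
          Matrix.one_apply, Matrix.single_apply, Matrix.mul_add, Matrix.add_mul]
      · simp [hij, hij.symm, hli, hlj, Ne.symm hli, Ne.symm hlj, hkl, Matrix.transvection,
          Matrix.one_apply, Matrix.single_apply, Matrix.mul_add, Matrix.add_mul]

open Matrix Matrix.SpecialLinearGroup in
theorem transvection_induction_SL {ι F : Type*} [Fintype ι] [DecidableEq ι] [Nontrivial ι]
    [Field F] (P : SpecialLinearGroup ι F → Prop)
    (htransvec : ∀ (i j : ι) (h : i ≠ j) c, P (SpecialLinearGroup.transvection h c))
    (hmul : ∀ A B, P A → P B → P (A * B)) (A : SpecialLinearGroup ι F) : P A := by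
  refine diagonal_transvection_induction' P _ (fun i j hij c hc ↦ ?_) htransvec hmul
  rw [diag2n_decompose hij c hc]
  refine hmul _ _ (hmul _ _ (hmul _ _ (hmul _ _ (hmul _ _ ?_ ?_) ?_) ?_) ?_) ?_
  all_goals exact htransvec _ _ _ _

set_option maxHeartbeats 2000000 in
open Matrix in
theorem aeval_const_on_SL {K F : Type*} [Field K] [Field F] [Algebra K F] (n : ℕ) (hn : 2 ≤ n)
    (p q r : MvPolynomial (Fin n × Fin n) K) (h : p * q - 1 = (genDet K n - 1) * r)
    (A : SpecialLinearGroup (Fin n) F) :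
    aeval (fun ij : Fin n × Fin n => A.1 ij.1 ij.2) p =
      aeval (fun ij : Fin n × Fin n => (1 : Matrix (Fin n) (Fin n) F) ij.1 ij.2) p := by
  haveI : Nontrivial (Fin n) := Fin.nontrivial_iff_two_le.2 hn
  suffices H : ∀ B A : SpecialLinearGroup (Fin n) F,
      aeval (fun ij : Fin n × Fin n => (A * B).1 ij.1 ij.2) p =
      aeval (fun ij : Fin n × Fin n => A.1 ij.1 ij.2) p by
    simpa using H A 1
  intro B
  refine transvection_induction_SL (fun B => ∀ A : SpecialLinearGroup (Fin n) F,
      aeval (fun ij : Fin n × Fin n => (A * B).1 ij.1 ij.2) p =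
      aeval (fun ij : Fin n × Fin n => A.1 ij.1 ij.2) p) ?_ ?_ B
  · intro i j hij c A
    let M : Matrix (Fin n) (Fin n) (Polynomial F) :=
      A.1.map Polynomial.C * Matrix.transvection i j Polynomial.X
    have hM : M.det = 1 := by
      have : (A.1.map Polynomial.C).det = 1 := by
        have := (RingHom.map_det (Polynomial.C : F →+* Polynomial F) A.1).symm
        rw [A.2, map_one] at this
        exact this
      rw [Matrix.det_mul, Matrix.det_transvection_of_ne _ _ hij, this, one_mul]
    have hu : IsUnit (aeval (fun ij : Fin n × Fin n => M ij.1 ij.2) p) := by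
      refine IsUnit.of_mul_eq_one (aeval (fun ij : Fin n × Fin n => M ij.1 ij.2) q) ?_
      have := congrArg (aeval (fun ij : Fin n × Fin n => M ij.1 ij.2)) h
      rw [map_mul, map_sub, map_sub, map_mul, aeval_genDet, hM, map_one, sub_self, zero_mul,
        sub_eq_zero] at this
      exact this
    obtain ⟨d, -, hd⟩ := Polynomial.isUnit_iff.1 hu
    have hev : ∀ t : F, aeval (fun ij : Fin n × Fin n =>
        (A.1 * Matrix.transvection i j t) ij.1 ij.2) p = d := by
      intro t
      have := congrArg ((Polynomial.aeval t).restrictScalars K) hd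
      rw [← AlgHom.comp_apply, comp_aeval] at this
      simp only [AlgHom.restrictScalars_apply, Polynomial.aeval_C, Algebra.algebraMap_self,
        RingHom.id_apply] at this
      rw [this]
      congr 2
      funext ij
      by_cases hj : ij.2 = j
      · simp [M, hj]
        exact mul_comm _ _
      · simp [M, hj]
    have h0 := hev 0
    rw [Matrix.transvection_zero, mul_one] at h0
    rw [h0]
    exact hev c
  · intro B C hB hC A
    rw [← mul_assoc, hC, hB]

/-- for an algebraically closed field `K` and `n ≥ 2`, the invertible elements
of `K[SL_n] = K[Mat_n]/(det - 1)` are exactly the nonzero scalars. -/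
theorem stmt2 (K : Type*) [Field K] [IsAlgClosed K] (n : ℕ) (hn : 2 ≤ n)
    (u : MvPolynomial (Fin n × Fin n) K ⧸ Ideal.span {genDet K n - 1}) :
    IsUnit u ↔ ∃ c : K, c ≠ 0 ∧
      u = algebraMap K (MvPolynomial (Fin n × Fin n) K ⧸ Ideal.span {genDet K n - 1}) c := by
  constructor
  · intro hu
    obtain ⟨v, huv⟩ := hu.exists_right_inv
    obtain ⟨p, rfl⟩ := Ideal.Quotient.mk_surjective u
    obtain ⟨q, rfl⟩ := Ideal.Quotient.mk_surjective v
    have hpq : p * q - 1 ∈ Ideal.span {genDet K n - 1} := by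
      rw [← Ideal.Quotient.eq, map_mul, huv, map_one]
    obtain ⟨r, hr⟩ := Ideal.mem_span_singleton.1 hpq
    set c : K := aeval (fun ij : Fin n × Fin n =>
      (1 : Matrix (Fin n) (Fin n) K) ij.1 ij.2) p with hc
    have hrad : (Ideal.span {genDet K n - 1}).IsRadical :=
      isRadical_iff_span_singleton.1 (squarefree_genDet K n ⟨0, by omega⟩).isRadical
    have hmem : p - C c ∈ Ideal.span {genDet K n - 1} := by
      rw [← hrad.radical, Ideal.radical_eq_sInf, Ideal.mem_sInf]
      rintro P ⟨hP, hprime⟩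
      let F := FractionRing (MvPolynomial (Fin n × Fin n) K ⧸ P)
      let φ : MvPolynomial (Fin n × Fin n) K →ₐ[K] F :=
        (IsScalarTower.toAlgHom K (MvPolynomial (Fin n × Fin n) K ⧸ P) F).comp
          (Ideal.Quotient.mkₐ K P)
      have hφ : ∀ x, φ x = 0 → x ∈ P := by
        intro x hx
        have h1 : algebraMap (MvPolynomial (Fin n × Fin n) K ⧸ P) F
          (Ideal.Quotient.mk P x) = 0 := hx
        rw [FaithfulSMul.algebraMap_eq_zero_iff] at h1
        exact Ideal.Quotient.eq_zero_iff_mem.1 h1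
      have hφP : ∀ x ∈ P, φ x = 0 := by
        intro x hx
        have h1 : algebraMap (MvPolynomial (Fin n × Fin n) K ⧸ P) F
          (Ideal.Quotient.mk P x) = 0 := by
          rw [Ideal.Quotient.eq_zero_iff_mem.2 hx, map_zero]
        exact h1
      let A : Matrix (Fin n) (Fin n) F := fun i j => φ (X (i, j))
      have hA : aeval (fun ij : Fin n × Fin n => A ij.1 ij.2) = φ := by
        ext ij
        simp [A]
      have hdet : A.det = 1 := by
        rw [← aeval_genDet (K := K), hA]
        have := hφP _ (hP (Ideal.mem_span_singleton_self _))
        rwa [map_sub, map_one, sub_eq_zero] at this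
      have key := aeval_const_on_SL n hn p q r hr (F := F) ⟨A, hdet⟩
      apply hφ
      simp only at key
      rw [hA] at key
      rw [map_sub, key, hc, sub_eq_zero, ← algebraMap_eq, AlgHom.commutes]
      rw [← Algebra.ofId_apply, ← AlgHom.comp_apply, comp_aeval]
      congr 2
      funext ij
      simp [Matrix.one_apply, apply_ite]
    have hu' : Ideal.Quotient.mk (Ideal.span {genDet K n - 1}) p =
        algebraMap K (MvPolynomial (Fin n × Fin n) K ⧸ Ideal.span {genDet K n - 1}) c := by
      rw [Ideal.Quotient.eq.2 hmem]
      rfl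
    refine ⟨c, ?_, hu'⟩
    have h1 := congrArg (aeval (fun ij : Fin n × Fin n =>
      (1 : Matrix (Fin n) (Fin n) K) ij.1 ij.2)) hr
    rw [map_mul, map_sub, map_sub, map_mul, aeval_genDet, Matrix.det_one, map_one, sub_self,
      zero_mul, sub_eq_zero] at h1
    exact left_ne_zero_of_mul_eq_one h1
  · rintro ⟨c, hc, rfl⟩
    exact (IsUnit.mk0 c hc).map _
end

section
/- With the lexicographic monomial order on ℤ[ξ_{ij}] given by ξ_{nn} > ξ_{n,n-1} > ⋯ > ξ_{n1} > ξ_{n-1,n} > ⋯ > ξ_{11}, the polynomial d = det((∂s_k/∂ξ_{in})_{k,i}) has leading term ±ξ_{n,n-1}^{n-1} ξ_{n-1,n-2}^{n-2} ⋯ ξ_{32}^2 ξ_{21}. -/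
open MvPolynomial

/-- The variable order `ξ_{nn} > ξ_{n,n-1} > ⋯ > ξ_{n1} > ξ_{n-1,n} > ⋯ > ξ_{11}`. -/
def varLt {n : ℕ} (v w : Fin n × Fin n) : Prop :=
  v.1 < w.1 ∨ (v.1 = w.1 ∧ v.2 < w.2)

/-- The corresponding lexicographic order on monomials (exponent vectors). -/
def lexLt {n : ℕ} (m m' : (Fin n × Fin n) →₀ ℕ) : Prop :=
  ∃ v : Fin n × Fin n, m v < m' v ∧ ∀ w : Fin n × Fin n, varLt v w → m w = m' w

/-- `s_k`: the sum of all `k × k` principal minors of the generic `n × n` matrix. -/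
noncomputable def sPoly (n k : ℕ) : MvPolynomial (Fin n × Fin n) ℤ :=
  ∑ Λ ∈ (Finset.univ.powersetCard k : Finset (Finset (Fin n))),
    Matrix.det (Matrix.of fun i j : Λ => X ((i : Fin n), (j : Fin n)))

/-- `d = det((∂s_k/∂ξ_{in})_{k,i})`. -/
noncomputable def dPolyZ (n : ℕ) (hn : 1 ≤ n) : MvPolynomial (Fin n × Fin n) ℤ :=
  Matrix.det (Matrix.of fun k i : Fin n =>
    pderiv (i, (⟨n - 1, by omega⟩ : Fin n)) (sPoly n ((k : ℕ) + 1)))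

/-- The exponent vector of the monomial `ξ_{n,n-1}^{n-1} ξ_{n-1,n-2}^{n-2} ⋯ ξ_{21}`:
the variable in (1-based) row `k+1`, column `k` gets exponent `k`. -/
noncomputable def dLeadMon (n : ℕ) : (Fin n × Fin n) →₀ ℕ :=
  Finsupp.equivFunOnFinite.symm fun v : Fin n × Fin n =>
    if (v.1 : ℕ) = (v.2 : ℕ) + 1 then (v.1 : ℕ) else 0


lemma det_mem_subring {R ι : Type*} [CommRing R] [Fintype ι] [DecidableEq ι] (S : Subring R)
    (M : Matrix ι ι R) (h : ∀ i j, M i j ∈ S) : M.det ∈ S := by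
  rw [Matrix.det_apply]
  refine S.sum_mem fun σ _ => ?_
  rw [Units.smul_def]
  exact S.zsmul_mem (S.prod_mem fun i _ => h _ _) _

lemma pow_mem_subring {R ι : Type*} [CommRing R] [Fintype ι] [DecidableEq ι] (S : Subring R)
    (M : Matrix ι ι R) (h : ∀ i j, M i j ∈ S) (k : ℕ) : ∀ i j, (M ^ k) i j ∈ S := by
  induction k with
  | zero =>
    intro i j
    rw [pow_zero, Matrix.one_apply]
    split_ifs
    · exact S.one_mem
    · exact S.zero_mem
  | succ k ih =>
    intro i j
    rw [pow_succ, Matrix.mul_apply]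
    exact S.sum_mem fun l _ => S.mul_mem (ih _ _) (h _ _)

/-- top-left submatrix of an infinite array -/
def topMat {R : Type*} (A : ℕ → ℕ → R) (t : ℕ) : Matrix (Fin t) (Fin t) R :=
  Matrix.of fun i j => A i j

/-- reduced Krylov determinant -/
noncomputable def redDet {R : Type*} [CommRing R] (A : ℕ → ℕ → R) (t : ℕ) : R :=
  Matrix.det (Matrix.of fun k j : Fin t =>
    Matrix.vecMul (fun l : Fin t => A t l) (topMat A t ^ (k : ℕ)) j)

/-- Krylov determinant -/
noncomputable def kryDet {R : Type*} [CommRing R] (A : ℕ → ℕ → R) (t : ℕ) : R :=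
  Matrix.det (Matrix.of fun k j : Fin (t + 1) => (topMat A (t + 1) ^ (k : ℕ)) (Fin.last t) j)

lemma rows_expand {R : Type*} [CommRing R] (A : ℕ → ℕ → R) (t : ℕ)
    (m : ℕ → Fin (t + 1) → R) (a : ℕ → R)
    (h0 : m 0 = Pi.single (Fin.last t) 1)
    (hs : ∀ k, m (k + 1) = a k • Pi.single (Fin.last t) 1 + Matrix.vecMul (m k) (topMat A (t + 1)))
    (k : ℕ) : ∀ j : Fin t, m (k + 1) j.castSucc =
      ∑ i ∈ Finset.range (k + 1), m (k - i) (Fin.last t) *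
        Matrix.vecMul (fun l : Fin t => A t l) (topMat A t ^ i) j := by
  have key : ∀ k (j : Fin t), m (k + 1) j.castSucc =
      (∑ l : Fin t, m k l.castSucc * A l j) + m k (Fin.last t) * A t j := by
    intro k j
    have hne : j.castSucc ≠ Fin.last t := (Fin.castSucc_lt_last j).ne
    rw [hs]
    simp [Matrix.vecMul, dotProduct, Fin.sum_univ_castSucc, topMat, Pi.single_eq_of_ne hne]
  induction k with
  | zero =>
    intro j
    rw [key]
    simp [h0, Pi.single_eq_of_ne (Fin.castSucc_lt_last _).ne]
  | succ k ih =>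
    intro j
    rw [key, Finset.sum_range_succ']
    congr 1
    · simp_rw [ih, Finset.sum_mul]
      rw [Finset.sum_comm]
      refine Finset.sum_congr rfl fun i _ => ?_
      rw [pow_succ, ← Matrix.vecMul_vecMul, Nat.add_sub_add_right]
      conv_rhs => rw [Matrix.vecMul, dotProduct, Finset.mul_sum]
      refine Finset.sum_congr rfl fun l _ => ?_
      simp [topMat, mul_assoc]
    · simp

lemma det_rows {R : Type*} [CommRing R] (A : ℕ → ℕ → R) (t : ℕ)
    (m : ℕ → Fin (t + 1) → R) (a : ℕ → R)
    (h0 : m 0 = Pi.single (Fin.last t) 1)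
    (hs : ∀ k, m (k + 1) = a k • Pi.single (Fin.last t) 1 + Matrix.vecMul (m k) (topMat A (t + 1))) :
    Matrix.det (Matrix.of fun k j : Fin (t + 1) => m k j) = (-1) ^ t * redDet A t := by
  rw [Matrix.det_succ_row_zero, Finset.sum_eq_single (Fin.last t)]
  · have e : ((Matrix.of fun k j : Fin (t + 1) => m k j).submatrix Fin.succ (Fin.last t).succAbove)
      = (Matrix.of fun k i : Fin t => if (i : ℕ) ≤ k then m (k - i) (Fin.last t) else 0) *
        (Matrix.of fun k j : Fin t =>
          Matrix.vecMul (fun l : Fin t => A t l) (topMat A t ^ (k : ℕ)) j) := by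
      ext k j
      rw [Matrix.mul_apply]
      simp only [Matrix.submatrix_apply, Matrix.of_apply, Fin.succAbove_last, Fin.val_succ]
      rw [rows_expand A t m a h0 hs]
      rw [Fin.sum_univ_eq_sum_range (fun i => (if i ≤ (k : ℕ) then m (k - i) (Fin.last t) else 0) *
        Matrix.vecMul (fun l : Fin t => A t l) (topMat A t ^ i) j)]
      have hsub : Finset.range ((k : ℕ) + 1) ⊆ Finset.range t :=
        Finset.range_subset_range.2 k.2
      rw [← Finset.sum_subset hsub]
      · refine Finset.sum_congr rfl fun i hi => ?_
        rw [if_pos (by simp at hi; omega)]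
      · intro i _ hi
        rw [if_neg (by simp at hi; omega), zero_mul]
    rw [e, Matrix.det_mul, Matrix.det_of_isLowerTriangular]
    · simp [h0, redDet]
    · intro i j hij
      have : (i : ℕ) < j := by simpa using hij
      simp only [Matrix.of_apply]
      rw [if_neg (by omega)]
  · intro b _ hb
    simp [h0, Pi.single_eq_of_ne hb]
  · simp

lemma kryDet_eq {R : Type*} [CommRing R] (A : ℕ → ℕ → R) (t : ℕ) :
    kryDet A t = (-1) ^ t * redDet A t := by
  apply det_rows A t (fun k j => (topMat A (t + 1) ^ k) (Fin.last t) j) (fun _ => 0)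
  · ext j
    simp [Matrix.one_apply, Pi.single_apply, eq_comm]
  · intro k
    ext j
    simp [pow_succ, Matrix.mul_apply, Matrix.vecMul, dotProduct]

lemma redDet_expand {R : Type*} [CommRing R] (A : ℕ → ℕ → R) (t : ℕ) :
    redDet A t = ∑ f : Fin t → Fin t, (∏ k, A t (f k)) *
      Matrix.det (Matrix.of fun k j : Fin t => (topMat A t ^ (k : ℕ)) (f k) j) := by
  have e : (Matrix.of fun k j : Fin t =>
      Matrix.vecMul (fun l : Fin t => A t l) (topMat A t ^ (k : ℕ)) j) =
      Matrix.of fun k : Fin t => ∑ l : Fin t, A t l • (topMat A t ^ (k : ℕ)) l := by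
    ext k j
    simp [Matrix.vecMul, dotProduct]
  rw [redDet, e]
  have h1 := MultilinearMap.map_sum
    (Matrix.detRowAlternating (R := R) (n := Fin t)).toMultilinearMap
    (fun (k l : Fin t) => A t l • fun j => (topMat A t ^ (k : ℕ)) l j)
  refine Eq.trans h1 ?_
  refine Finset.sum_congr rfl fun f _ => ?_
  exact MultilinearMap.map_smul_univ
    (Matrix.detRowAlternating (R := R) (n := Fin t)).toMultilinearMap
    (fun k => A t (f k)) (fun k j => (topMat A t ^ (k : ℕ)) (f k) j)

/-! ### the derivative part -/

/-- Polynomials all of whose coefficients are killed by `pderiv v`. -/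
noncomputable def constSub {σ : Type*} (v : σ) : Subring (Polynomial (MvPolynomial σ ℤ)) where
  carrier := {p | ∀ k, pderiv v (p.coeff k) = 0}
  mul_mem' := by
    intro p q hp hq k
    rw [Polynomial.coeff_mul, map_sum]
    refine Finset.sum_eq_zero fun x _ => ?_
    rw [Derivation.leibniz, hp, hq]; simp
  one_mem' := by
    intro k
    rw [Polynomial.coeff_one]
    split_ifs <;> simp
  add_mem' := by
    intro p q hp hq k
    rw [Polynomial.coeff_add, map_add, hp, hq, add_zero]
  zero_mem' := by intro k; simp
  neg_mem' := by
    intro p hp k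
    rw [Polynomial.coeff_neg, map_neg, hp, neg_zero]

/-- `1 + T ξ` -/
noncomputable def NMat (n : ℕ) :
    Matrix (Fin n) (Fin n) (Polynomial (MvPolynomial (Fin n × Fin n) ℤ)) :=
  1 + (Polynomial.X : Polynomial (MvPolynomial (Fin n × Fin n) ℤ)) •
    (Matrix.of fun i j : Fin n => (X (i, j) : MvPolynomial (Fin n × Fin n) ℤ)).map Polynomial.C

lemma NMat_apply (n : ℕ) (i j : Fin n) :
    NMat n i j = (if i = j then 1 else 0) + Polynomial.X * Polynomial.C (X (i, j)) := by
  simp [NMat, Matrix.one_apply]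

lemma sPoly_eq (n k : ℕ) : sPoly n k = (NMat n).det.coeff k := by
  rw [NMat, Matrix.coeff_det_one_add_X_smul_eq_sum_minors]
  rfl

lemma adj_const (n : ℕ) (c i i0 : Fin n) (k : ℕ) :
    pderiv (i0, c) (((NMat n).adjugate c i).coeff k) = 0 := by
  have : (NMat n).adjugate c i ∈ constSub (i0, c) := by
    have h1 : (NMat n).adjugate c i = ((NMat n).transpose.updateRow c (Pi.single i 1)).det := by
      rw [← Matrix.adjugate_apply, ← Matrix.adjugate_transpose]; rfl
    rw [h1]
    apply det_mem_subring
    intro a b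
    rw [Matrix.updateRow_apply]
    split_ifs with hac
    · rw [Pi.single_apply]
      split_ifs
      · exact Subring.one_mem _
      · exact Subring.zero_mem _
    · rw [Matrix.transpose_apply, NMat_apply]
      refine Subring.add_mem _ ?_ (Subring.mul_mem _ ?_ ?_)
      · split_ifs
        · exact Subring.one_mem _
        · exact Subring.zero_mem _
      · intro k
        rw [Polynomial.coeff_X]
        split_ifs <;> simp
      · intro k
        rw [Polynomial.coeff_C]
        split_ifs
        · rw [pderiv_X_of_ne]
          intro h
          exact hac (Prod.ext_iff.1 h).2
        · simp
  exact this k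

lemma pderiv_sPoly (n k : ℕ) (i c : Fin n) :
    pderiv (i, c) (sPoly n (k + 1)) = ((NMat n).adjugate c i).coeff k := by
  have h : (NMat n).det = ∑ l, (NMat n).adjugate c l * NMat n l c := by
    have := congrFun (congrFun (Matrix.adjugate_mul (NMat n)) c) c
    rw [Matrix.mul_apply] at this
    rw [this]; simp
  rw [sPoly_eq, h, Polynomial.finsetSum_coeff, map_sum, Finset.sum_eq_single i]
  · rw [NMat_apply, mul_add, Polynomial.coeff_add, mul_comm Polynomial.X, ← mul_assoc,
      Polynomial.coeff_mul_X, Polynomial.coeff_mul_C, map_add, Derivation.leibniz, adj_const,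
      pderiv_X_self]
    split_ifs <;> simp [adj_const]
  · intro l _ hl
    rw [NMat_apply, mul_add, Polynomial.coeff_add, mul_comm Polynomial.X, ← mul_assoc,
      Polynomial.coeff_mul_X, Polynomial.coeff_mul_C, map_add, Derivation.leibniz, adj_const,
      pderiv_X_of_ne (by intro h; exact hl (Prod.ext_iff.1 h).1)]
    split_ifs <;> simp [adj_const]
  · simp

/-- the array of minus the variables, extended by zero -/
noncomputable def negArr (n : ℕ) (i j : ℕ) : MvPolynomial (Fin n × Fin n) ℤ :=
  if h : i < n ∧ j < n then -X (⟨i, h.1⟩, ⟨j, h.2⟩) else 0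

lemma adj_rec (n k : ℕ) (c j : Fin n) :
    ((NMat n).adjugate c j).coeff (k + 1) = (if c = j then sPoly n (k + 1) else 0) +
      ∑ l, ((NMat n).adjugate c l).coeff k * (- X (l, j)) := by
  have := congrArg (fun p => Polynomial.coeff p (k + 1))
    (congrFun (congrFun (Matrix.adjugate_mul (NMat n)) c) j)
  simp only [Matrix.mul_apply, NMat_apply, mul_add, Finset.sum_add_distrib,
    mul_comm Polynomial.X, ← mul_assoc, Polynomial.coeff_add, Polynomial.finsetSum_coeff,
      Polynomial.coeff_mul_X, Polynomial.coeff_mul_C, Matrix.smul_apply, Matrix.one_apply,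
      mul_ite, mul_one, mul_zero, smul_eq_mul] at this
  simp only [Finset.sum_neg_distrib, mul_neg]
  rw [← sub_eq_add_neg, eq_sub_iff_add_eq, sPoly_eq]
  rw [apply_ite (fun p => Polynomial.coeff p (k+1)), Polynomial.coeff_zero] at this
  rw [← this]
  congr 1
  rw [Finset.sum_eq_single j] <;> simp +contextual

lemma adj_zero (n : ℕ) (c j : Fin n) :
    ((NMat n).adjugate c j).coeff 0 = if c = j then 1 else 0 := by
  have := congrArg (fun p => Polynomial.coeff p 0)
    (congrFun (congrFun (Matrix.adjugate_mul (NMat n)) c) j)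
  simp only [Matrix.mul_apply, NMat_apply, mul_add, Finset.sum_add_distrib,
    mul_comm Polynomial.X, ← mul_assoc, Polynomial.coeff_add, Polynomial.finsetSum_coeff,
      Polynomial.coeff_mul_X_zero, Matrix.smul_apply, Matrix.one_apply,
      mul_ite, mul_one, mul_zero, smul_eq_mul, Finset.sum_const_zero, add_zero] at this
  rw [apply_ite (fun p => Polynomial.coeff p 0), Polynomial.coeff_zero, ← sPoly_eq] at this
  have h0 : sPoly n 0 = 1 := by simp [sPoly]
  rw [h0] at this
  rw [← this]
  rw [Finset.sum_eq_single j] <;> simp +contextual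

lemma dPolyZ_eq (t : ℕ) (h : 1 ≤ t + 1) : dPolyZ (t + 1) h = kryDet (negArr (t + 1)) t := by
  rw [kryDet_eq, dPolyZ]
  have hl : (⟨t + 1 - 1, by omega⟩ : Fin (t + 1)) = Fin.last t := rfl
  simp_rw [hl, pderiv_sPoly]
  apply det_rows (negArr (t + 1)) t
    (fun k j => ((NMat (t + 1)).adjugate (Fin.last t) j).coeff k) (fun k => sPoly (t + 1) (k + 1))
  · ext1 j
    simp only [adj_zero, Pi.single_apply, eq_comm]
  · intro k
    ext1 j
    simp only [adj_rec]
    have hn : ∀ i : Fin (t + 1), negArr (t + 1) i j = -X (i, j) := fun i => by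
      simp only [negArr, i.2, j.2, and_self, dite_true, Fin.eta]
    simp [Matrix.vecMul, dotProduct, topMat, hn, Pi.single_apply, eq_comm]

/-! ### leading terms -/

/-- `m` is the leading monomial with coefficient `± 1`. -/
def IsLead {n : ℕ} (p : MvPolynomial (Fin n × Fin n) ℤ) (m : (Fin n × Fin n) →₀ ℕ) : Prop :=
  (p.coeff m = 1 ∨ p.coeff m = -1) ∧ ∀ m' ∈ p.support, m' ≠ m → lexLt m' m

lemma IsLead.neg {n : ℕ} {p : MvPolynomial (Fin n × Fin n) ℤ} {m : (Fin n × Fin n) →₀ ℕ}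
    (h : IsLead p m) : IsLead (-p) m := by
  refine ⟨?_, ?_⟩
  · rw [coeff_neg]
    rcases h.1 with h | h <;> simp [h]
  · rw [support_neg]; exact h.2

lemma IsLead.neg_pow_mul {n : ℕ} {p : MvPolynomial (Fin n × Fin n) ℤ} {m : (Fin n × Fin n) →₀ ℕ}
    (h : IsLead p m) (k : ℕ) : IsLead ((-1) ^ k * p) m := by
  rcases neg_one_pow_eq_or (MvPolynomial (Fin n × Fin n) ℤ) k with e | e <;> rw [e]
  · simpa using h
  · simpa using h.neg

lemma IsLead.X_pow_mul {n : ℕ} {p : MvPolynomial (Fin n × Fin n) ℤ} {m : (Fin n × Fin n) →₀ ℕ}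
    (h : IsLead p m) (v : Fin n × Fin n) (k : ℕ) :
    IsLead (X v ^ k * p) (Finsupp.single v k + m) := by
  rw [X_pow_eq_monomial]
  refine ⟨?_, ?_⟩
  · rw [coeff_monomial_mul, one_mul]; exact h.1
  · intro m' hm' hne
    rw [mem_support_iff, coeff_monomial_mul'] at hm'
    split_ifs at hm' with hle
    · obtain ⟨q, rfl⟩ := exists_add_of_le hle
      rw [add_tsub_cancel_left, one_mul, ← mem_support_iff] at hm'
      obtain ⟨w, h1, h2⟩ := h.2 q hm' (fun e => hne (by rw [e]))
      refine ⟨w, ?_, fun u hu => ?_⟩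
      · simpa using h1
      · simpa using h2 u hu
    · exact absurd rfl hm'

lemma lexLt_irrefl {n : ℕ} (m : (Fin n × Fin n) →₀ ℕ) : ¬ lexLt m m := by
  rintro ⟨v, h, _⟩
  exact lt_irrefl _ h

lemma IsLead.add {n : ℕ} {p q : MvPolynomial (Fin n × Fin n) ℤ} {m : (Fin n × Fin n) →₀ ℕ}
    (h : IsLead p m) (hq : ∀ m' ∈ q.support, lexLt m' m) : IsLead (p + q) m := by
  refine ⟨?_, ?_⟩
  · have : q.coeff m = 0 := by
      by_contra hc
      exact lexLt_irrefl m (hq m (mem_support_iff.2 hc))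
    rw [coeff_add, this, add_zero]; exact h.1
  · intro m' hm' hne
    rcases Finset.mem_union.1 (support_add hm') with h1 | h1
    · exact h.2 _ h1 hne
    · exact hq _ h1

/-- Polynomials not involving `w`. -/
noncomputable def freeSub {σ : Type*} (w : σ) : Subring (MvPolynomial σ ℤ) where
  carrier := {p | degreeOf w p = 0}
  mul_mem' := by
    intro p q hp hq
    have := degreeOf_mul_le w p q
    simp only [Set.mem_ofPred_eq] at *
    omega
  one_mem' := degreeOf_one w
  add_mem' := by
    intro p q hp hq
    have := degreeOf_add_le w p q
    simp only [Set.mem_ofPred_eq] at *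
    simpa [hp, hq] using this
  zero_mem' := degreeOf_zero w
  neg_mem' := by
    intro p hp
    simp only [Set.mem_ofPred_eq, degreeOf_neg] at *
    exact hp

lemma negArr_free {n i j : ℕ} {w : Fin n × Fin n} (h : (w.1 : ℕ) ≠ i ∨ (w.2 : ℕ) ≠ j) :
    negArr n i j ∈ freeSub w := by
  unfold negArr
  split_ifs with hh
  · refine Subring.neg_mem _ ?_
    apply degreeOf_X_of_ne
    rintro rfl
    simp at h
  · exact Subring.zero_mem _

lemma degreeOf_negArr_le {n i j : ℕ} (w : Fin n × Fin n) : degreeOf w (negArr n i j) ≤ 1 := by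
  unfold negArr
  split_ifs with hh
  · rw [degreeOf_neg, degreeOf_X]
    split_ifs <;> simp
  · simp

/-- partial leading monomials -/
noncomputable def partMon (n t : ℕ) : (Fin n × Fin n) →₀ ℕ :=
  Finsupp.equivFunOnFinite.symm fun v : Fin n × Fin n =>
    if (v.1 : ℕ) = (v.2 : ℕ) + 1 ∧ (v.1 : ℕ) ≤ t then (v.1 : ℕ) else 0

lemma partMon_succ (n t : ℕ) (ht : t + 1 < n) : partMon n (t + 1) =
    Finsupp.single (⟨t + 1, ht⟩, ⟨t, by omega⟩) (t + 1) + partMon n t := by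
  ext ⟨a, b⟩
  simp only [partMon, Finsupp.equivFunOnFinite_symm_apply_apply, Finsupp.add_apply,
    Finsupp.single_apply, Prod.mk.injEq, Fin.ext_iff]
  split_ifs <;> omega

lemma kry_lead (n t : ℕ) (ht : t < n) : IsLead (kryDet (negArr n) t) (partMon n t) := by
  induction t with
  | zero =>
    have h1 : kryDet (negArr n) 0 = 1 := by simp [kryDet]
    have h2 : partMon n 0 = 0 := by
      ext ⟨a, b⟩
      simp only [partMon, Finsupp.equivFunOnFinite_symm_apply_apply, Finsupp.coe_zero,
        Pi.zero_apply]
      split_ifs <;> omega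
    rw [h1, h2]
    refine ⟨Or.inl (by simp), fun m' hm' hne => ?_⟩
    rw [mem_support_iff, coeff_one] at hm'
    exact absurd hm' (by simp [hne.symm])
  | succ t ih =>
    rw [kryDet_eq]
    apply IsLead.neg_pow_mul
    rw [redDet_expand, ← Finset.add_sum_erase _ _ (Finset.mem_univ (fun _ => Fin.last t))]
    apply IsLead.add
    · rw [partMon_succ n t ht]
      have e : (∏ k : Fin (t + 1), negArr n (t + 1) ((fun _ : Fin (t + 1) => Fin.last t) k)) =
          (-1) ^ (t + 1) * X (⟨t + 1, ht⟩, ⟨t, by omega⟩) ^ (t + 1) := by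
        have hh : t + 1 < n ∧ t < n := ⟨ht, by omega⟩
        rw [Finset.prod_const, ← mul_pow]
        simp [negArr, hh]
      rw [e, mul_assoc]
      exact ((ih (by omega)).X_pow_mul _ _).neg_pow_mul _
    · intro m' hm'
      obtain ⟨f, hf, hm'⟩ := Finset.mem_biUnion.1 (support_sum hm')
      have hne : f ≠ fun _ => Fin.last t := (Finset.mem_erase.1 hf).1
      have hB : ∀ w : Fin n × Fin n, t + 1 ≤ (w.1 : ℕ) →
          Matrix.det (Matrix.of fun k j : Fin (t + 1) =>
            (topMat (negArr n) (t + 1) ^ (k : ℕ)) (f k) j) ∈ freeSub w := by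
        intro w hw
        apply det_mem_subring
        intro i j
        apply pow_mem_subring
        intro i j
        exact negArr_free (Or.inl (by omega))
      refine ⟨(⟨t + 1, ht⟩, ⟨t, by omega⟩), ?_, ?_⟩
      · have hr : partMon n (t + 1) (⟨t + 1, ht⟩, ⟨t, by omega⟩) = t + 1 := by
          simp [partMon]
        rw [hr]
        refine lt_of_le_of_lt (monomial_le_degreeOf _ hm') ?_
        refine lt_of_le_of_lt (degreeOf_mul_le _ _ _) ?_
        have hd := hB (⟨t + 1, ht⟩, ⟨t, by omega⟩) le_rfl
        rw [show degreeOf _ (Matrix.det _) = 0 from hd, add_zero]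
        refine lt_of_le_of_lt (degreeOf_prod_le _ _ _) ?_
        obtain ⟨k0, hk0⟩ := Function.ne_iff.1 hne
        have : ∑ k : Fin (t + 1), degreeOf (⟨t + 1, ht⟩, ⟨t, by omega⟩) (negArr n (t + 1) (f k))
            < ∑ k : Fin (t + 1), 1 := by
          refine Finset.sum_lt_sum (fun k _ => degreeOf_negArr_le _) ⟨k0, Finset.mem_univ _, ?_⟩
          have : negArr n (t + 1) (f k0) ∈ freeSub
              ((⟨t + 1, ht⟩, ⟨t, by omega⟩) : Fin n × Fin n) := by
            apply negArr_free
            right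
            intro h
            exact hk0 (Fin.ext h.symm)
          rw [show degreeOf _ _ = 0 from this]
          exact Nat.zero_lt_one
        simpa using this
      · intro w hw
        have hw' : t + 1 < (w.1 : ℕ) ∨ (t + 1 = (w.1 : ℕ) ∧ t < (w.2 : ℕ)) := by
          simpa [varLt, Fin.lt_def, Fin.ext_iff] using hw
        have hr : partMon n (t + 1) w = 0 := by
          simp only [partMon, Finsupp.equivFunOnFinite_symm_apply_apply]
          rw [if_neg]; omega
        rw [hr]
        have hz : (∏ k, negArr n (t + 1) (f k)) * Matrix.det (Matrix.of fun k j : Fin (t + 1) =>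
            (topMat (negArr n) (t + 1) ^ (k : ℕ)) (f k) j) ∈ freeSub w := by
          refine Subring.mul_mem _ (Subring.prod_mem _ fun k _ => ?_) (hB w (by omega))
          apply negArr_free
          have := (f k).2
          omega
        have := monomial_le_degreeOf w hm'
        rw [show degreeOf w _ = 0 from hz] at this
        omega

/-- with respect to the lexicographic order above, `d` has leading term
`± ξ_{n,n-1}^{n-1} ξ_{n-1,n-2}^{n-2} ⋯ ξ_{32}^2 ξ_{21}`. -/
theorem stmt13 (n : ℕ) (hn : 2 ≤ n) :
    ((dPolyZ n (by omega)).coeff (dLeadMon n) = 1 ∨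
     (dPolyZ n (by omega)).coeff (dLeadMon n) = -1) ∧
    ∀ m ∈ (dPolyZ n (by omega)).support, m ≠ dLeadMon n → lexLt m (dLeadMon n) := by
  obtain ⟨t, rfl⟩ : ∃ t, n = t + 1 := ⟨n - 1, by omega⟩
  have h : dLeadMon (t + 1) = partMon (t + 1) t := by
    ext ⟨a, b⟩
    simp only [partMon, dLeadMon, Finsupp.equivFunOnFinite_symm_apply_apply]
    have := a.2
    split_ifs <;> omega
  rw [dPolyZ_eq, h]
  exact kry_lead (t + 1) t (by omega)
end

section
/- Let K be an algebraically closed field, n ≥ 3. The ideal of K[Mat_n] generated by det − 1 and d is prime, where d = det((∂s_k/∂ξ_{in})_{k,i}); equivalently the variety {A ∈ SL_n(K) : d(A) = 0} is irreducible and (det − 1, d) is radical. -/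
open MvPolynomial

/-- `s_k`: the sum of all `k × k` principal minors of the generic `n × n` matrix. -/
noncomputable def sPolyK (K : Type*) [CommRing K] (n k : ℕ) :
    MvPolynomial (Fin n × Fin n) K :=
  ∑ Λ ∈ (Finset.univ.powersetCard k : Finset (Finset (Fin n))),
    Matrix.det (Matrix.of fun i j : Λ => X ((i : Fin n), (j : Fin n)))

/-- `d = det((∂s_k/∂ξ_{in})_{k,i})`. -/
noncomputable def dPoly (K : Type*) [CommRing K] (n : ℕ) (hn : 1 ≤ n) :
    MvPolynomial (Fin n × Fin n) K :=
  Matrix.det (Matrix.of fun k i : Fin n =>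
    pderiv (i, (⟨n - 1, by omega⟩ : Fin n)) (sPolyK K n ((k : ℕ) + 1)))


open Matrix

/-- Krylov determinant. -/
noncomputable def kry {R : Type*} [CommRing R] {m : ℕ} (B : Matrix (Fin m) (Fin m) R)
    (v : Fin m → R) : R :=
  Matrix.det (Matrix.of fun k : Fin m => v ᵥ* (B ^ (k : ℕ)))

lemma kry_map {R S : Type*} [CommRing R] [CommRing S] (f : R →+* S) {m : ℕ}
    (B : Matrix (Fin m) (Fin m) R) (v : Fin m → R) :
    f (kry B v) = kry (B.map f) (fun j => f (v j)) := by
  unfold kry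
  rw [RingHom.map_det]
  congr 1
  ext k j
  have : (B.map f) ^ (k : ℕ) = (B ^ (k : ℕ)).map f := by
    simpa using (map_pow f.mapMatrix B k).symm
  simp [this, Matrix.vecMul, dotProduct]

lemma kry_smul {R : Type*} [CommRing R] {m : ℕ} (t : R)
    (B : Matrix (Fin m) (Fin m) R) (v : Fin m → R) :
    kry (t • B) v = t ^ (∑ k : Fin m, (k : ℕ)) * kry B v := by
  unfold kry
  rw [← Finset.prod_pow_eq_pow_sum, ← Matrix.det_mul_column]
  congr 1
  ext k j
  simp [smul_pow, Matrix.vecMul_smul]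

lemma kry_smul_vec {R : Type*} [CommRing R] {m : ℕ} (t : R)
    (B : Matrix (Fin m) (Fin m) R) (v : Fin m → R) :
    kry B (t • v) = t ^ m * kry B v := by
  unfold kry
  have : t ^ m = ∏ k : Fin m, t := by simp
  rw [this, ← Matrix.det_mul_column]
  congr 1
  ext k j
  simp [Matrix.smul_vecMul]

lemma det_rec {R : Type*} [CommRing R] {m : ℕ} (B : Matrix (Fin m) (Fin m) R)
    (v : Fin m → R) (r : ℕ → Fin m → R) (c : ℕ → R) (h0 : r 0 = v)
    (hs : ∀ k, r (k + 1) = c k • v + r k ᵥ* B) :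
    Matrix.det (Matrix.of fun k : Fin m => r k) = kry B v := by
  have key : ∀ k, r k = v ᵥ* B ^ k + ∑ j ∈ Finset.range k, c (k - 1 - j) • (v ᵥ* B ^ j) := by
    intro k
    induction k with
    | zero => simp [h0]
    | succ k ih =>
      rw [hs, ih, Finset.sum_range_succ', Matrix.add_vecMul, Matrix.sum_vecMul]
      simp only [Matrix.vecMul_vecMul, Matrix.smul_vecMul, ← pow_succ]
      have : ∀ j, k + 1 - 1 - (j + 1) = k - 1 - j := by intro j; omega
      simp only [this]
      simp
      abel
  let T : Matrix (Fin m) (Fin m) R := Matrix.of fun k j =>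
    if (j : ℕ) < k then c (k - 1 - j) else if j = k then 1 else 0
  have hT : T.det = 1 := by
    rw [Matrix.det_of_isLowerTriangular]
    · simp [T]
    · intro i j hij
      have : i < j := by simpa using hij
      have h1 : ¬ ((j : ℕ) < i) := by have := Fin.lt_def.1 this; omega
      simp only [T, Matrix.of_apply, if_neg h1, if_neg this.ne']
  have : (Matrix.of fun k : Fin m => r k) = T * (Matrix.of fun k : Fin m => v ᵥ* (B ^ (k : ℕ))) := by
    ext k j
    rw [Matrix.mul_apply]
    simp only [T, Matrix.of_apply, key k, Pi.add_apply, Finset.sum_apply, Pi.smul_apply, smul_eq_mul]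
    have h1 : ∀ x : Fin m, (if (x : ℕ) < k then c (k - 1 - x) else if x = k then (1 : R) else 0)
        * (v ᵥ* B ^ (x : ℕ)) j = (if (x : ℕ) < k then c (k - 1 - x) * (v ᵥ* B ^ (x : ℕ)) j else 0)
          + (if x = k then (v ᵥ* B ^ (x : ℕ)) j else 0) := by
      intro x
      by_cases hx : (x : ℕ) < k
      · have : x ≠ k := by rintro rfl; omega
        simp [hx, this]
      · simp [hx]
    rw [Finset.sum_congr rfl (fun x _ => h1 x), Finset.sum_add_distrib]
    simp only [Finset.sum_ite_eq', Finset.mem_univ, if_true]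
    rw [add_comm]
    congr 1
    rw [Fin.sum_univ_eq_sum_range (fun x => if x < (k : ℕ) then c (k - 1 - x) * (v ᵥ* B ^ x) j else 0) m,
      ← Finset.sum_filter]
    congr 1
    ext x
    simp
    omega
  rw [this, Matrix.det_mul, hT, one_mul, kry]

lemma kry_last {R : Type*} [CommRing R] {m : ℕ} (A : Matrix (Fin (m + 1)) (Fin (m + 1)) R) :
    kry A (Pi.single (Fin.last m) 1) = (-1) ^ m *
      kry (A.submatrix Fin.castSucc Fin.castSucc) (fun j => A (Fin.last m) j.castSucc) := by
  rw [kry, Matrix.det_succ_row_zero, Finset.sum_eq_single (Fin.last m)]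
  · simp only [Matrix.of_apply, Fin.val_zero, pow_zero, Matrix.vecMul_one, Pi.single_eq_same,
      Fin.val_last, mul_one]
    congr 1
    rw [← det_rec (A.submatrix Fin.castSucc Fin.castSucc) (fun j => A (Fin.last m) j.castSucc)
      (fun k j => (Pi.single (Fin.last m) 1 ᵥ* A ^ (k + 1)) j.castSucc)
      (fun k => (Pi.single (Fin.last m) 1 ᵥ* A ^ (k + 1)) (Fin.last m))]
    · congr 1
      ext k j
      simp
    · ext j; simp
    · intro k
      ext j
      rw [pow_succ A (k + 1), ← Matrix.vecMul_vecMul]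
      simp only [Matrix.vecMul, dotProduct, Fin.sum_univ_castSucc, Pi.add_apply, Pi.smul_apply,
        smul_eq_mul, Matrix.submatrix_apply]
      ring
  · intro j _ hj
    have : (Pi.single (Fin.last m) 1 : Fin (m + 1) → R) j = 0 := Pi.single_eq_of_ne hj 1
    rw [Matrix.of_apply, Fin.val_zero, pow_zero, Matrix.vecMul_one, this]
    simp
  · simp

lemma kry_shift {R : Type*} [CommRing R] {m : ℕ} (v : Fin (m + 1) → R) :
    kry (Matrix.of fun i j : Fin (m + 1) => if (j : ℕ) = i + 1 then (1 : R) else 0) v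
      = v 0 ^ (m + 1) := by
  have key : ∀ (k : ℕ) (j : Fin (m + 1)),
      (v ᵥ* (Matrix.of fun i j : Fin (m + 1) => if (j : ℕ) = i + 1 then (1 : R) else 0) ^ k) j
        = if h : k ≤ j then v ⟨j - k, by omega⟩ else 0 := by
    intro k
    induction k with
    | zero => intro j; simp
    | succ k ih =>
      intro j
      rw [pow_succ, ← Matrix.vecMul_vecMul]
      conv_lhs => rw [Matrix.vecMul, dotProduct]
      simp only [ih, Matrix.of_apply, mul_ite, mul_one, mul_zero]
      by_cases hj : (j : ℕ) = 0
      · have : ∀ x : Fin (m + 1), ¬ ((j : ℕ) = x + 1) := by intro x; omega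
        simp [hj]
      · rw [Finset.sum_eq_single ⟨j - 1, by omega⟩]
        · have : (j : ℕ) = j - 1 + 1 := by omega
          simp only [← this, if_true]
          by_cases hk : k + 1 ≤ j
          · have hk' : k ≤ (j : ℕ) - 1 := by omega
            simp only [hk, hk', dif_pos]
            congr 2
            omega
          · have hk' : ¬ k ≤ (j : ℕ) - 1 := by omega
            simp [hk, hk']
        · intro x _ hx
          rw [if_neg]
          intro h
          apply hx
          ext
          simp [h]
        · simp
  rw [kry, Matrix.det_of_isUpperTriangular]
  · simp [key]
  · intro i j hij
    have : j < i := hij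
    have h : ¬ (i : ℕ) ≤ j := by have := Fin.lt_def.1 this; omega
    simp [key, h]

lemma coeff_pderiv {σ K : Type*} [CommRing K] [DecidableEq σ] (i : σ) (p : MvPolynomial σ K) :
    (aeval (fun j => Polynomial.C (X j : MvPolynomial σ K) +
      if j = i then Polynomial.X else 0) p : Polynomial (MvPolynomial σ K)).coeff 0 = p ∧
    (aeval (fun j => Polynomial.C (X j : MvPolynomial σ K) +
      if j = i then Polynomial.X else 0) p : Polynomial (MvPolynomial σ K)).coeff 1
      = pderiv i p := by
  induction p using MvPolynomial.induction_on with
  | C a =>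
    have : (algebraMap K (Polynomial (MvPolynomial σ K))) a = Polynomial.C (C a) := rfl
    simp [this]
  | add p q hp hq => simp [hp, hq]
  | mul_X p j hp =>
    simp only [map_mul, aeval_X, mul_add, Polynomial.coeff_add, Polynomial.coeff_mul_C, hp]
    by_cases hj : j = i
    · subst hj
      simp [hp.1, Polynomial.coeff_mul_X]
      ring
    · simp [hj, pderiv_X_of_ne hj]
      ring

lemma sPolyK_eq (K : Type*) [CommRing K] (n k : ℕ) :
    sPolyK K n k = (det (1 + (Polynomial.X : Polynomial (MvPolynomial (Fin n × Fin n) K)) •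
      (Matrix.of fun i j : Fin n => (X (i, j) : MvPolynomial (Fin n × Fin n) K)).map
        Polynomial.C)).coeff k := by
  rw [coeff_det_one_add_X_smul_eq_sum_minors]
  rfl

lemma pderiv_sPolyK (K : Type*) [CommRing K] (n k : ℕ) (i l : Fin n) :
    pderiv (i, l) (sPolyK K n (k + 1)) =
      (adjugate (1 + (Polynomial.X : Polynomial (MvPolynomial (Fin n × Fin n) K)) •
      (Matrix.of fun i j : Fin n => (X (i, j) : MvPolynomial (Fin n × Fin n) K)).map
        Polynomial.C) l i).coeff k := by
  set M0 := (1 + (Polynomial.X : Polynomial (MvPolynomial (Fin n × Fin n) K)) •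
      (Matrix.of fun i j : Fin n => (X (i, j) : MvPolynomial (Fin n × Fin n) K)).map
        Polynomial.C) with hM0
  rw [← (coeff_pderiv (i, l) (sPolyK K n (k + 1))).2]
  set τ := (aeval (fun j => Polynomial.C (X j : MvPolynomial (Fin n × Fin n) K) +
      if j = (i, l) then Polynomial.X else 0) :
      MvPolynomial (Fin n × Fin n) K →ₐ[K] Polynomial (MvPolynomial (Fin n × Fin n) K)) with hτ
  have h1 : τ (sPolyK K n (k + 1)) =
      (det ((Polynomial.mapRingHom (τ : MvPolynomial (Fin n × Fin n) K →+* _)).mapMatrix M0)).coeff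
        (k + 1) := by
    rw [sPolyK_eq, ← RingHom.map_det]
    simp [hM0]
  set γ := Polynomial.mapRingHom (Polynomial.C : MvPolynomial (Fin n × Fin n) K →+* _) with hγ
  have h2 : (Polynomial.mapRingHom (τ : MvPolynomial (Fin n × Fin n) K →+* _)).mapMatrix M0 =
      updateCol (γ.mapMatrix M0) l ((fun j => γ.mapMatrix M0 j l) +
        (Polynomial.X * Polynomial.C Polynomial.X) • (Pi.single i 1)) := by
    ext1 a b
    by_cases hb : b = l
    · subst hb
      by_cases ha : a = i
      · subst ha
        simp [hM0, hτ, hγ, Matrix.one_apply, apply_ite (Polynomial.map _)]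
        ring
      · have : (a, b) ≠ (i, b) := by simp [ha]
        simp [hM0, hτ, hγ, ha, Matrix.one_apply, apply_ite (Polynomial.map _)]
    · simp [hM0, hτ, hγ, hb, Matrix.one_apply, apply_ite (Polynomial.map _)]
  rw [h1, h2, Matrix.det_updateCol_add, Matrix.det_updateCol_smul,
    Matrix.updateCol_eq_self, ← RingHom.map_det]
  have h3 : (updateCol (γ.mapMatrix M0) l (Pi.single i 1)).det = γ (adjugate M0 l i) := by
    have := congrFun (congrFun (RingHom.map_adjugate (S := Polynomial (Polynomial (MvPolynomial (Fin n × Fin n) K))) γ M0) l) i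
    rw [RingHom.mapMatrix_apply, Matrix.map_apply] at this
    rw [this, ← Matrix.transpose_apply (adjugate (γ.mapMatrix M0)), Matrix.adjugate_transpose,
      Matrix.adjugate_def, Matrix.of_apply, Matrix.transpose_transpose, Matrix.cramer_apply]
  rw [h3, mul_assoc, Polynomial.coeff_add, Polynomial.coeff_X_mul, Polynomial.coeff_C_mul]
  simp [hγ]

lemma dPoly_eq (K : Type*) [CommRing K] (m : ℕ) (h : 1 ≤ m + 1) :
    ∃ e : ℕ, dPoly K (m + 1) h = (-1) ^ e *
      kry (Matrix.of fun i j : Fin m => (X (i.castSucc, j.castSucc) :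
          MvPolynomial (Fin (m + 1) × Fin (m + 1)) K))
        (fun j => X (Fin.last m, j.castSucc)) := by
  set A := (Matrix.of fun i j : Fin (m+1) => (X (i, j) : MvPolynomial (Fin (m+1) × Fin (m+1)) K)) with hA
  set M0 := (1 + (Polynomial.X : Polynomial (MvPolynomial (Fin (m+1) × Fin (m+1)) K)) •
      A.map Polynomial.C) with hM0
  have h1 : dPoly K (m + 1) h = kry (-A) (Pi.single (Fin.last m) 1) := by
    rw [← det_rec (-A) (Pi.single (Fin.last m) 1)
      (fun k i => (adjugate M0 (Fin.last m) i).coeff k) (fun k => (det M0).coeff (k + 1))]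
    · rw [dPoly]
      congr 1
      ext k i : 2
      rw [Matrix.of_apply, Matrix.of_apply, pderiv_sPolyK]
      rfl
    · ext1 i
      have := congrFun (congrFun (RingHom.map_adjugate Polynomial.constantCoeff M0) (Fin.last m)) i
      rw [RingHom.mapMatrix_apply, Matrix.map_apply] at this
      rw [← Polynomial.constantCoeff_apply, this]
      have h2 : Polynomial.constantCoeff.mapMatrix M0 = 1 := by
        ext1 a b
        simp [hM0, Matrix.one_apply]
        split_ifs <;> simp
      rw [h2]
      simp [Matrix.one_apply, Pi.single_apply, eq_comm]
    · intro k
      ext1 i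
      have := congrFun (congrFun (Matrix.adjugate_mul M0) (Fin.last m)) i
      rw [hM0, Matrix.mul_add, ← hM0, mul_one, Matrix.mul_smul] at this
      have := congrArg (fun p => Polynomial.coeff p (k + 1)) this
      simp [Matrix.mul_apply] at this
      have h4 := eq_sub_of_add_eq this
      refine h4.trans ?_
      rw [Pi.add_apply, Matrix.vecMul_neg, Pi.neg_apply, ← sub_eq_add_neg, Pi.smul_apply,
        Matrix.one_apply, Pi.single_apply]
      congr 1
      by_cases hi : i = Fin.last m
      · simp [hi]
      · simp [hi, Ne.symm hi]
  have h2 : -A = (-1 : MvPolynomial (Fin (m+1) × Fin (m+1)) K) • A := by simp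
  rw [h1, h2, kry_smul, kry_last, ← mul_assoc, ← pow_add]
  exact ⟨_, rfl⟩

lemma prime_of_frac {R σ : Type*} [CommRing R] [IsDomain R] (F : MvPolynomial σ R)
    (h0 : constantCoeff F = -1)
    (hF : Prime (map (algebraMap R (FractionRing R)) F)) : Prime F := by
  have hinj : Function.Injective (map (σ := σ) (algebraMap R (FractionRing R))) :=
    map_injective _ (IsFractionRing.injective R (FractionRing R))
  have cancel : ∀ (r : R) (p q : MvPolynomial σ R), r ≠ 0 → C r * p = F * q → F ∣ p := by
    intro r p q hr h
    have h1 : map (Ideal.Quotient.mk (Ideal.span {r})) q = 0 := by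
      have h2 := congrArg (map (Ideal.Quotient.mk (Ideal.span {r}))) h
      have h3 : Ideal.Quotient.mk (Ideal.span {r}) r = 0 :=
        Ideal.Quotient.eq_zero_iff_mem.2 (Ideal.mem_span_singleton_self r)
      rw [map_mul, map_mul, map_C, h3, C_0, zero_mul] at h2
      have h4 : IsUnit ((map (Ideal.Quotient.mk (Ideal.span {r})) F :
          MvPolynomial σ (R ⧸ Ideal.span {r})) : MvPowerSeries σ (R ⧸ Ideal.span {r})) := by
        rw [MvPowerSeries.isUnit_iff_constantCoeff]
        have : MvPowerSeries.constantCoeff ((map (Ideal.Quotient.mk (Ideal.span {r})) F :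
          MvPolynomial σ (R ⧸ Ideal.span {r})) : MvPowerSeries σ (R ⧸ Ideal.span {r})) = -1 := by
          rw [← MvPowerSeries.coeff_zero_eq_constantCoeff_apply, MvPolynomial.coeff_coe, coeff_map]
          rw [← constantCoeff_eq, h0]
          simp
        rw [this]
        exact isUnit_one.neg
      have h5 := congrArg (fun p : MvPolynomial σ (R ⧸ Ideal.span {r}) =>
        (p : MvPowerSeries σ (R ⧸ Ideal.span {r}))) h2
      simp only [MvPolynomial.coe_mul, MvPolynomial.coe_zero] at h5
      have h6 := (h4.mul_right_eq_zero).1 h5.symm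
      exact (MvPolynomial.coe_eq_zero_iff).1 h6
    have h7 : C r ∣ q := by
      rw [MvPolynomial.C_dvd_iff_dvd_coeff]
      intro i
      have := congrArg (coeff i) h1
      rw [coeff_map, coeff_zero] at this
      exact Ideal.mem_span_singleton.1 (Ideal.Quotient.eq_zero_iff_mem.1 this)
    obtain ⟨q', rfl⟩ := h7
    refine ⟨q', ?_⟩
    have hC : (C r : MvPolynomial σ R) ≠ 0 := by simpa using hr
    apply mul_left_cancel₀ hC
    rw [h]; ring
  have descend : ∀ p, map (algebraMap R (FractionRing R)) F ∣ map (algebraMap R (FractionRing R)) p →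
      F ∣ p := by
    rintro p ⟨q, hq⟩
    let _ := algebraMvPolynomial (σ := σ) (R := R) (S := FractionRing R)
    obtain ⟨⟨q0, s⟩, hs⟩ := IsLocalization.surj (M := (nonZeroDivisors R).map (C (σ := σ))) q
    obtain ⟨s, r, hr, rfl⟩ := s
    have hr0 : r ≠ 0 := nonZeroDivisors.ne_zero hr
    apply cancel r p q0 hr0
    apply hinj
    rw [map_mul, map_mul, hq]
    simp only [algebraMap_def] at hs
    rw [← hs]
    ring
  refine ⟨?_, ?_, ?_⟩
  · rintro rfl; simp at h0
  · intro hu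
    exact hF.not_isUnit (hu.map _)
  · intro a b hab
    have := map_dvd (map (algebraMap R (FractionRing R))) hab
    rw [map_mul] at this
    exact (hF.dvd_or_dvd this).imp (descend a) (descend b)

lemma prime_lin {R σ : Type*} [CommRing R] [IsDomain R] [Fintype σ] (a : σ → R) (i0 : σ)
    (h : a i0 ≠ 0) : Prime (∑ i, C (a i) * X i - 1 : MvPolynomial σ R) := by
  classical
  apply prime_of_frac
  · simp
  · have hc : ∀ i, coeff (Finsupp.single i 1) ((map (algebraMap R (FractionRing R)))
        (∑ i, C (a i) * X i - 1)) = algebraMap R (FractionRing R) (a i) := by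
      intro i
      simp only [coeff_map]
      congr 1
      rw [coeff_sub, coeff_sum, Finset.sum_eq_single i]
      · rw [coeff_C_mul, coeff_X, if_pos rfl, ← C_1, coeff_C, if_neg]
        · simp
        · intro h
          have := DFunLike.congr_fun h i
          simp at this
      · intro j _ hj
        rw [coeff_C_mul, coeff_X, if_neg]
        · simp
        · rw [Finsupp.single_left_inj one_ne_zero]; exact hj
      · simp
    have h0 : algebraMap R (FractionRing R) (a i0) ≠ 0 := by
      simpa using h
    apply Irreducible.prime
    apply irreducible_of_totalDegree_eq_one
    · apply le_antisymm
      · rw [map_sub, map_sum]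
        refine (totalDegree_sub _ _).trans (max_le ?_ (by simp))
        apply totalDegree_finsetSum_le
        intro i _
        rw [map_mul, map_C, map_X]
        refine (totalDegree_mul _ _).trans ?_
        simp
      · by_contra hlt
        have h1 : totalDegree ((map (algebraMap R (FractionRing R)))
          (∑ i, C (a i) * X i - 1)) = 0 := by omega
        rw [totalDegree_eq_zero_iff_eq_C] at h1
        have h2 := hc i0
        rw [h1, coeff_C, if_neg] at h2
        · exact h0 h2.symm
        · intro h
          have := DFunLike.congr_fun h i0
          simp at this
    · intro x hx
      have := hx (Finsupp.single i0 1)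
      rw [hc] at this
      exact isUnit_of_dvd_unit this (isUnit_iff_ne_zero.2 h0)

lemma prime_ideal_lin {Q σ : Type*} [CommRing Q] [IsDomain Q] [Fintype σ] (κ : Q) (hκ : Prime κ)
    (a : σ → Q) (i0 : σ) (h : ¬ κ ∣ a i0) :
    (Ideal.span {(∑ i, C (a i) * X i - 1 : MvPolynomial σ Q), C κ}).IsPrime := by
  have : (Ideal.span {κ}).IsPrime := (Ideal.span_singleton_prime hκ.ne_zero).2 hκ
  have hp := prime_lin (σ := σ) (fun i => Ideal.Quotient.mk (Ideal.span {κ}) (a i)) i0 (by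
    rw [Ne, Ideal.Quotient.eq_zero_iff_mem, Ideal.mem_span_singleton]; exact h)
  have hI := (Ideal.span_singleton_prime hp.ne_zero).2 hp
  have hsurj : Function.Surjective (map (σ := σ) (Ideal.Quotient.mk (Ideal.span {κ}))) :=
    map_surjective _ Ideal.Quotient.mk_surjective
  have h2 := Ideal.comap_isPrime (map (σ := σ) (Ideal.Quotient.mk (Ideal.span {κ}))) (Ideal.span
    {∑ i, C (Ideal.Quotient.mk (Ideal.span {κ}) (a i)) * X i - 1})
  have h3 : (∑ i, C (Ideal.Quotient.mk (Ideal.span {κ}) (a i)) * X i - 1 :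
      MvPolynomial σ (Q ⧸ Ideal.span {κ})) =
      map (σ := σ) (Ideal.Quotient.mk (Ideal.span {κ})) (∑ i, C (a i) * X i - 1) := by simp
  rw [h3, ← Set.image_singleton, ← Ideal.map_span, Ideal.comap_map_of_surjective' _ hsurj,
    ker_map, Ideal.mk_ker, Ideal.map_span, Set.image_singleton, ← Ideal.span_union] at h2
  exact h2

/-- The Krylov determinant of the generic matrix and the generic vector. -/
noncomputable def kap (K : Type*) [CommRing K] (m : ℕ) :
    MvPolynomial ((Fin m × Fin m) ⊕ Fin m) K :=
  kry (Matrix.of fun i j => X (Sum.inl (i, j))) (fun j => X (Sum.inr j))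

lemma kap_map {K S : Type*} [CommRing K] [CommRing S] [Algebra K S] (m : ℕ)
    (f : MvPolynomial ((Fin m × Fin m) ⊕ Fin m) K →ₐ[K] S) :
    f (kap K m) = kry (Matrix.of fun i j => f (X (Sum.inl (i, j)))) (fun j => f (X (Sum.inr j))) :=
  kry_map (f : MvPolynomial ((Fin m × Fin m) ⊕ Fin m) K →+* S) _ _

/-- scaling of the matrix -/
noncomputable def thet (K : Type*) [CommRing K] (m : ℕ) :
    MvPolynomial ((Fin m × Fin m) ⊕ Fin m) K →ₐ[K]
      Polynomial (MvPolynomial ((Fin m × Fin m) ⊕ Fin m) K) :=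
  aeval (Sum.elim (fun ij => Polynomial.X * Polynomial.C (X (Sum.inl ij)))
    (fun j => Polynomial.C (X (Sum.inr j))))

noncomputable def thet' (K : Type*) [CommRing K] (m : ℕ) :
    MvPolynomial ((Fin m × Fin m) ⊕ Fin m) K →ₐ[K]
      Polynomial (MvPolynomial ((Fin m × Fin m) ⊕ Fin m) K) :=
  aeval (fun x => Polynomial.X * Polynomial.C (X x))

noncomputable def phi (K : Type*) [CommRing K] (m : ℕ) :
    MvPolynomial ((Fin (m + 1) × Fin (m + 1)) ⊕ Fin (m + 1)) K →ₐ[K]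
      MvPolynomial ((Fin m × Fin m) ⊕ Fin m) K :=
  aeval (Sum.elim (fun ij => Fin.lastCases 0 (fun j => Fin.lastCases (X (Sum.inr j))
      (fun i => X (Sum.inl (i, j))) ij.1) ij.2)
    (fun j => (Pi.single (Fin.last m) 1 : Fin (m + 1) → _) j))

/-- shift specialization -/
noncomputable def sig (K : Type*) [CommRing K] (m : ℕ) :
    MvPolynomial ((Fin m × Fin m) ⊕ Fin m) K →ₐ[K] MvPolynomial (Fin m) K :=
  aeval (Sum.elim (fun ij => if (ij.2 : ℕ) = ij.1 + 1 then 1 else 0) (fun j => X j))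

noncomputable def sig0 (K : Type*) [CommRing K] (m : ℕ) :
    MvPolynomial ((Fin m × Fin m) ⊕ Fin m) K →ₐ[K] MvPolynomial (Fin m) K :=
  aeval (Sum.elim (fun _ => 0) (fun j => X j))

noncomputable def iot (K : Type*) [CommRing K] (m : ℕ) :
    MvPolynomial (Fin m) K →ₐ[K] MvPolynomial ((Fin m × Fin m) ⊕ Fin m) K :=
  aeval (fun j => X (Sum.inr j))

lemma thet_kap (K : Type*) [CommRing K] (m : ℕ) :
    thet K m (kap K m) = Polynomial.X ^ (∑ k : Fin m, (k : ℕ)) * Polynomial.C (kap K m) := by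
  rw [kap_map, kap, kry_map Polynomial.C, ← kry_smul]
  congr 1
  · ext1 i j
    simp [thet]
  · ext1 j
    simp [thet]

lemma phi_kap (K : Type*) [CommRing K] (m : ℕ) :
    phi K m (kap K (m + 1)) = (-1) ^ m * kap K m := by
  rw [kap_map]
  have : (fun j => phi K m (X (Sum.inr j))) = Pi.single (Fin.last m) 1 := by
    ext1 j
    simp [phi]
  rw [this, kry_last, kap]
  congr 2
  · ext1 i j
    simp [phi]
  · ext1 j
    simp [phi]

lemma sig_kap (K : Type*) [CommRing K] (m : ℕ) :
    sig K (m + 1) (kap K (m + 1)) = X 0 ^ (m + 1) := by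
  rw [kap_map]
  have := kry_shift (fun j : Fin (m + 1) => (X j : MvPolynomial (Fin (m + 1)) K))
  rw [← this]
  congr 1
  · ext1 i j
    simp [sig]
  · ext1 j
    simp [sig]

lemma thet_phi (K : Type*) [CommRing K] (m : ℕ)
    (p : MvPolynomial ((Fin (m + 1) × Fin (m + 1)) ⊕ Fin (m + 1)) K) :
    thet' K m (phi K m p) = Polynomial.map (phi K m : _ →+* _) (thet K (m + 1) p) := by
  have : (thet' K m).comp (phi K m) = (Polynomial.mapAlgHom (phi K m)).comp (thet K (m + 1)) := by
    apply MvPolynomial.algHom_ext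
    rintro (⟨i, j⟩ | j)
    · induction j using Fin.lastCases with
      | last => simp [thet, thet', phi]
      | cast j =>
        induction i using Fin.lastCases with
        | last => simp [thet, thet', phi]
        | cast i => simp [thet, thet', phi]
    · by_cases hj : j = Fin.last m
      · subst hj; simp [thet, thet', phi]
      · simp [thet, thet', phi, Pi.single_eq_of_ne hj]
  exact DFunLike.congr_fun this p

lemma thet_eval_one (K : Type*) [CommRing K] (m : ℕ)
    (p : MvPolynomial ((Fin m × Fin m) ⊕ Fin m) K) :
    (thet K m p).eval 1 = p := by
  have : ((Polynomial.aeval (1 : MvPolynomial ((Fin m × Fin m) ⊕ Fin m) K)).restrictScalars K).comp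
      (thet K m) = AlgHom.id K _ := by
    apply MvPolynomial.algHom_ext
    rintro (⟨i, j⟩ | j) <;> simp [thet]
  have := DFunLike.congr_fun this p
  simpa [Polynomial.aeval_def, Polynomial.eval₂_eq_eval_map] using this

lemma thet_eval_zero (K : Type*) [CommRing K] (m : ℕ)
    (p : MvPolynomial ((Fin m × Fin m) ⊕ Fin m) K) :
    (thet K m p).eval 0 = iot K m (sig0 K m p) := by
  have : ((Polynomial.aeval (0 : MvPolynomial ((Fin m × Fin m) ⊕ Fin m) K)).restrictScalars K).comp
      (thet K m) = (iot K m).comp (sig0 K m) := by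
    apply MvPolynomial.algHom_ext
    rintro (⟨i, j⟩ | j) <;> simp [thet, iot, sig0]
  have := DFunLike.congr_fun this p
  simpa [Polynomial.aeval_def, Polynomial.eval₂_eq_eval_map] using this

lemma sig_iot (K : Type*) [CommRing K] (m : ℕ) (p : MvPolynomial (Fin m) K) :
    sig K m (iot K m p) = p := by
  have : (sig K m).comp (iot K m) = AlgHom.id K _ := by
    apply MvPolynomial.algHom_ext
    intro j
    simp [sig, iot]
  exact DFunLike.congr_fun this p

lemma kap_ne_zero (K : Type*) [Field K] (m : ℕ) : kap K m ≠ 0 := by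
  cases m with
  | zero => simp [kap, kry]
  | succ m =>
    intro h
    have := sig_kap K m
    rw [h, map_zero] at this
    exact pow_ne_zero _ (X_ne_zero _) this.symm

lemma kap_step (K : Type*) [Field K] (m : ℕ)
    (f g : MvPolynomial ((Fin (m + 2) × Fin (m + 2)) ⊕ Fin (m + 2)) K)
    (hfg : kap K (m + 2) = f * g) (hu : IsUnit (phi K (m + 1) f)) : IsUnit f := by
  have hphi := phi_kap K (m + 1)
  have hphi0 : phi K (m + 1) (kap K (m + 2)) ≠ 0 := by
    rw [hphi]
    exact mul_ne_zero (pow_ne_zero _ (by simp)) (kap_ne_zero K (m + 1))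
  have hk0 := kap_ne_zero K (m + 2)
  set D := ∑ k : Fin (m + 2), (k : ℕ) with hD
  have h1 : thet K (m + 2) f * thet K (m + 2) g
      = Polynomial.X ^ D * Polynomial.C (kap K (m + 2)) := by
    rw [← map_mul, ← hfg, thet_kap]
  have h2 : thet' K (m + 1) (phi K (m + 1) f) * thet' K (m + 1) (phi K (m + 1) g)
      = Polynomial.X ^ D * Polynomial.C (phi K (m + 1) (kap K (m + 2))) := by
    rw [thet_phi, thet_phi, ← Polynomial.map_mul, h1]
    simp
  have hn1 : (thet K (m + 2) f).natDegree + (thet K (m + 2) g).natDegree = D := by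
    rw [← Polynomial.natDegree_mul, h1]
    · rw [mul_comm, Polynomial.natDegree_C_mul_X_pow _ _ hk0]
    · intro h; rw [h, zero_mul] at h1
      exact mul_ne_zero (pow_ne_zero _ Polynomial.X_ne_zero) (by simpa using hk0) h1.symm
    · intro h; rw [h, mul_zero] at h1
      exact mul_ne_zero (pow_ne_zero _ Polynomial.X_ne_zero) (by simpa using hk0) h1.symm
  have hn2 : (thet' K (m + 1) (phi K (m + 1) f)).natDegree +
      (thet' K (m + 1) (phi K (m + 1) g)).natDegree = D := by
    rw [← Polynomial.natDegree_mul, h2]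
    · rw [mul_comm, Polynomial.natDegree_C_mul_X_pow _ _ hphi0]
    · intro h; rw [h, zero_mul] at h2
      exact mul_ne_zero (pow_ne_zero _ Polynomial.X_ne_zero) (by simpa using hphi0) h2.symm
    · intro h; rw [h, mul_zero] at h2
      exact mul_ne_zero (pow_ne_zero _ Polynomial.X_ne_zero) (by simpa using hphi0) h2.symm
  have hn3 : (thet' K (m + 1) (phi K (m + 1) f)).natDegree = 0 :=
    Polynomial.natDegree_eq_zero_of_isUnit (hu.map (thet' K (m + 1)))
  have hn4 : (thet' K (m + 1) (phi K (m + 1) g)).natDegree ≤ (thet K (m + 2) g).natDegree := by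
    rw [thet_phi]
    exact Polynomial.natDegree_map_le
  have hn5 : (thet K (m + 2) f).natDegree = 0 := by omega
  have hf : f = iot K (m + 2) (sig0 K (m + 2) f) := by
    rw [← thet_eval_zero]
    conv_lhs => rw [← thet_eval_one K (m + 2) f]
    rw [Polynomial.eq_C_of_natDegree_eq_zero hn5]
    simp
  set f0 := sig0 K (m + 2) f with hf0
  have hdvd : f0 ∣ X 0 ^ (m + 2) := by
    rw [← sig_kap K (m + 1), hfg, map_mul]
    refine Dvd.intro _ (congrArg (· * _) ?_)
    conv_rhs => rw [hf, sig_iot]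
  obtain ⟨i, hi, hass⟩ := (dvd_prime_pow (MvPolynomial.X_prime (R := K) (i := (0 : Fin (m + 2)))) _).1 hdvd
  have hi0 : i = 0 := by
    by_contra hi0
    have h5 : Associated (phi K (m + 1) f) (phi K (m + 1) (iot K (m + 2) (X 0 ^ i))) := by
      rw [hf]
      exact (hass.map (iot K (m + 2))).map (phi K (m + 1))
    have h6 : phi K (m + 1) (iot K (m + 2) (X 0 ^ i)) = 0 := by
      have : (0 : Fin (m + 2)) ≠ Fin.last (m + 1) := by
        intro h
        have := congrArg Fin.val h
        simp at this
      simp [iot, phi, hi0]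
    rw [h6] at h5
    rw [(associated_zero_iff_eq_zero _).1 h5] at hu
    exact not_isUnit_zero hu
  rw [hi0, pow_zero] at hass
  have := (associated_one_iff_isUnit.1 hass).map (iot K (m + 2))
  rwa [← hf] at this

lemma kap_irr (K : Type*) [Field K] (m : ℕ) : Irreducible (kap K (m + 1)) := by
  induction m with
  | zero =>
    have : kap K (0 + 1) = X (Sum.inr 0) := by
      simp [kap, kry]
    rw [this]
    exact MvPolynomial.X_prime.irreducible
  | succ m ih =>
    have hirr : Irreducible (phi K (m + 1) (kap K (m + 2))) := by
      rw [phi_kap]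
      exact (irreducible_isUnit_mul (isUnit_one.neg.pow _)).2 ih
    refine ⟨fun h => hirr.not_isUnit (h.map _), ?_⟩
    intro f g hfg
    have h := hirr.isUnit_or_isUnit (a := phi K (m + 1) f) (b := phi K (m + 1) g)
      (by rw [hfg, map_mul])
    rcases h with h | h
    · exact Or.inl (kap_step K m f g hfg h)
    · exact Or.inr (kap_step K m g f (by rw [hfg, mul_comm]) h)

/-- Separating the last column. -/
def colEquiv (m : ℕ) : Fin (m + 1) × Fin (m + 1) ≃ Fin (m + 1) ⊕ ((Fin m × Fin m) ⊕ Fin m) where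
  toFun ij := Fin.lastCases (motive := fun _ => Fin (m + 1) ⊕ ((Fin m × Fin m) ⊕ Fin m))
    (Sum.inl ij.1) (fun j => Fin.lastCases
      (motive := fun _ => Fin (m + 1) ⊕ ((Fin m × Fin m) ⊕ Fin m)) (Sum.inr (Sum.inr j))
      (fun i => Sum.inr (Sum.inl (i, j))) ij.1) ij.2
  invFun := Sum.elim (fun i => (i, Fin.last m)) (Sum.elim (fun ij => (ij.1.castSucc, ij.2.castSucc))
    (fun j => (Fin.last m, j.castSucc)))
  left_inv := by
    rintro ⟨i, j⟩
    induction j using Fin.lastCases with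
    | last => simp
    | cast j =>
      induction i using Fin.lastCases with
      | last => simp
      | cast i => simp
  right_inv := by
    rintro (i | ⟨i, j⟩ | j) <;> simp

noncomputable def colAlg (K : Type*) [CommRing K] (m : ℕ) :
    MvPolynomial (Fin (m + 1) × Fin (m + 1)) K ≃+*
      MvPolynomial (Fin (m + 1)) (MvPolynomial ((Fin m × Fin m) ⊕ Fin m) K) :=
  (renameEquiv K (colEquiv m)).toRingEquiv.trans (sumRingEquiv K _ _)

lemma colAlg_last (K : Type*) [CommRing K] (m : ℕ) (i : Fin (m + 1)) :
    colAlg K m (X (i, Fin.last m)) = X i := by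
  simp [colAlg, colEquiv, sumRingEquiv_X_inl]

lemma colAlg_cast (K : Type*) [CommRing K] (m : ℕ) (i j : Fin m) :
    colAlg K m (X (i.castSucc, j.castSucc)) = C (X (Sum.inl (i, j))) := by
  simp [colAlg, colEquiv, sumRingEquiv_X_inr]

lemma colAlg_row (K : Type*) [CommRing K] (m : ℕ) (j : Fin m) :
    colAlg K m (X (Fin.last m, j.castSucc)) = C (X (Sum.inr j)) := by
  simp [colAlg, colEquiv, sumRingEquiv_X_inr]

/-- the first columns -/
noncomputable def colB (K : Type*) [CommRing K] (m : ℕ) (i : Fin (m + 1)) (j : Fin m) :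
    MvPolynomial ((Fin m × Fin m) ⊕ Fin m) K :=
  Fin.lastCases (motive := fun _ => MvPolynomial ((Fin m × Fin m) ⊕ Fin m) K)
    (X (Sum.inr j)) (fun i => X (Sum.inl (i, j))) i

lemma colAlg_colB (K : Type*) [CommRing K] (m : ℕ) (i : Fin (m + 1)) (j : Fin m) :
    colAlg K m (X (i, j.castSucc)) = C (colB K m i j) := by
  induction i using Fin.lastCases with
  | last => simp [colB, colAlg_row]
  | cast i => simp [colB, colAlg_cast]

noncomputable def colA (K : Type*) [CommRing K] (m : ℕ) (i : Fin (m + 1)) :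
    MvPolynomial ((Fin m × Fin m) ⊕ Fin m) K :=
  (-1) ^ ((i : ℕ) + m) * det (Matrix.of fun a b : Fin m => colB K m (i.succAbove a) b)

lemma colAlg_det (K : Type*) [CommRing K] (m : ℕ) :
    colAlg K m (genDet K (m + 1)) = ∑ i, C (colA K m i) * X i := by
  have h1 : colAlg K m (genDet K (m + 1)) =
      det (Matrix.of fun i j : Fin (m + 1) => colAlg K m (X (i, j))) :=
    RingEquiv.map_det (colAlg K m) _
  rw [h1, Matrix.det_succ_column _ (Fin.last m)]
  refine Finset.sum_congr rfl fun i _ => ?_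
  rw [Matrix.of_apply, colAlg_last, colA, map_mul, RingHom.map_det, Fin.val_last]
  have h2 : (Matrix.of fun i j : Fin (m + 1) => colAlg K m (X (i, j))).submatrix i.succAbove
      (Fin.last m).succAbove = (C : _ →+* MvPolynomial (Fin (m + 1)) _).mapMatrix
        (Matrix.of fun a b : Fin m => colB K m (i.succAbove a) b) := by
    ext1 a b
    simp only [Matrix.submatrix_apply, Matrix.of_apply, Fin.succAbove_last, colAlg_colB,
      RingHom.mapMatrix_apply, Matrix.map_apply]
  rw [h2]
  simp only [map_pow, map_neg, map_one]
  ring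

lemma colA_not_dvd (K : Type*) [Field K] (m : ℕ) :
    ¬ kap K (m + 1) ∣ colA K (m + 1) (Fin.last (m + 1)) := by
  intro h
  let ε : MvPolynomial ((Fin (m + 1) × Fin (m + 1)) ⊕ Fin (m + 1)) K →ₐ[K] K :=
    aeval (Sum.elim (fun ij => if ij.1 = ij.2 then 1 else 0) (fun _ => 0))
  have h1 := map_dvd ε h
  have h2 : ε (kap K (m + 1)) = 0 := by
    rw [kap_map, kry]
    apply Matrix.det_eq_zero_of_row_eq_zero 0
    intro j
    simp [ε]
  have h3 : ε (det (Matrix.of fun a b : Fin (m + 1) =>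
      colB K (m + 1) ((Fin.last (m + 1)).succAbove a) b)) = 1 := by
    have : ε (det (Matrix.of fun a b : Fin (m + 1) =>
      colB K (m + 1) ((Fin.last (m + 1)).succAbove a) b)) = det (Matrix.of fun a b : Fin (m + 1) =>
      ε (colB K (m + 1) ((Fin.last (m + 1)).succAbove a) b)) :=
      AlgHom.map_det ε _
    rw [this, ← Matrix.det_one (n := Fin (m + 1))]
    congr 1
    ext1 a b
    simp [colB, ε, Matrix.one_apply]
  rw [h2, zero_dvd_iff, colA, map_mul, h3] at h1
  simp at h1

lemma colAlg_det_sub (K : Type*) [CommRing K] (m : ℕ) :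
    colAlg K m (genDet K (m + 1) - 1) = ∑ i, C (colA K m i) * X i - 1 := by
  rw [map_sub, map_one, colAlg_det]

lemma colAlg_kry (K : Type*) [CommRing K] (m : ℕ) :
    colAlg K m (kry (Matrix.of fun i j : Fin m => (X (i.castSucc, j.castSucc) :
          MvPolynomial (Fin (m + 1) × Fin (m + 1)) K))
        (fun j => X (Fin.last m, j.castSucc))) = C (kap K m) := by
  refine (kry_map (colAlg K m).toRingHom _ _).trans ?_
  rw [kap, kry_map C]
  congr 1
  · ext1 i j
    exact colAlg_cast K m i j
  · ext1 j
    exact colAlg_row K m j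

lemma colAlg_dPoly (K : Type*) [CommRing K] (m : ℕ) (h : 1 ≤ m + 1) :
    ∃ e : ℕ, colAlg K m (dPoly K (m + 1) h) = (-1) ^ e * C (kap K m) := by
  obtain ⟨e, he⟩ := dPoly_eq K m h
  refine ⟨e, ?_⟩
  rw [he, map_mul, map_pow, map_neg, map_one, colAlg_kry]

lemma span_pair_prime {R S : Type*} [CommRing R] [CommRing S] (e : R ≃+* S) {a b : R}
    {a' b' u : S} (ha : e a = a') (hu : IsUnit u) (hb : e b = u * b')
    (hp : (Ideal.span {a', b'}).IsPrime) : (Ideal.span {a, b}).IsPrime := by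
  have hmap : Ideal.map e (Ideal.span {a, b}) = Ideal.span {a', b'} := by
    rw [Ideal.map_span, Set.image_pair, ha, hb, Ideal.span_insert, Ideal.span_insert a',
      Ideal.span_singleton_mul_left_unit hu]
  have hc := Ideal.comap_isPrime e (Ideal.span {a', b'})
  rw [← hmap, Ideal.comap_map_of_bijective _ e.bijective] at hc
  exact hc

lemma unit_neg_pow {R : Type*} [CommRing R] (e : ℕ) : IsUnit ((-1 : R) ^ e) :=
  isUnit_one.neg.pow e

lemma main_aux (K : Type*) [Field K] (m : ℕ) (h : 1 ≤ m + 1 + 1) :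
    (Ideal.span {genDet K (m + 1 + 1) - 1, dPoly K (m + 1 + 1) h}).IsPrime := by
  have hp := prime_ideal_lin (kap K (m + 1)) (kap_irr K m).prime (colA K (m + 1))
    (Fin.last (m + 1)) (colA_not_dvd K m)
  obtain ⟨e, he⟩ := colAlg_dPoly K (m + 1) h
  have hd := colAlg_det_sub K (m + 1)
  have hu : IsUnit ((-1 : MvPolynomial (Fin (m + 1 + 1))
    (MvPolynomial ((Fin (m + 1) × Fin (m + 1)) ⊕ Fin (m + 1)) K)) ^ e) :=
    unit_neg_pow e
  exact span_pair_prime (colAlg K (m + 1)) hd hu he hp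

/-- for an algebraically closed field `K` and `n ≥ 3`, the ideal of
`K[Mat_n]` generated by `det − 1` and `d` is prime. -/
theorem stmt17 (K : Type*) [Field K] [IsAlgClosed K] (n : ℕ) (hn : 3 ≤ n) :
    (Ideal.span {genDet K n - 1, dPoly K n (by omega)}).IsPrime := by
  obtain ⟨m, rfl⟩ : ∃ m, n = m + 1 + 1 := ⟨n - 2, by omega⟩
  exact main_aux K m (by omega)
end
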